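/- arXiv:2010.03637 — 2 statements merged into one kernel-verified Lean document; each statement's English description precedes it below -/
import Mathlib

section
/- The group W_F (defined in the context) is metabelian, and the Dehn function of its given finite presentation satisfies δ(n) ≈ 2ⁿ. -/
open Function

/-- The length of the reduced word representing an element of a free group. -/
noncomputable def freeNorm {X : Type*} (w : FreeGroup X) : ℕ :=
  letI := Classical.decEq X
  w.toWord.length

/-- `w` equals a product of exactly `N` conjugates of elements of `R ∪ R⁻¹`. -/
def AreaIs {G : Type*} [Group G] (R : Set G) (w : G) (N : ℕ) : Prop :=
  ∃ r f : Fin N → G, (∀ i, r i ∈ R ∨ (r i)⁻¹ ∈ R) ∧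
    w = (List.ofFn fun i => (f i)⁻¹ * r i * f i).prod

/-- The area of `w` with respect to the relators `R` is at most `N`. -/
def AreaLe {G : Type*} [Group G] (R : Set G) (w : G) (N : ℕ) : Prop :=
  ∃ N' ≤ N, AreaIs R w N'

/-- `f ≼ g` : there is `C > 0` with `f n ≤ C * g (C * n) + C * n + C` for all `n`. -/
def Dominates (f g : ℕ → ℕ) : Prop :=
  ∃ C : ℕ, 0 < C ∧ ∀ n, f n ≤ C * g (C * n) + C * n + C

/-- `f ≈ g` : mutual domination. -/
def DehnEquiv (f g : ℕ → ℕ) : Prop := Dominates f g ∧ Dominates g f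

/-- `δ` is the Dehn function of the presentation with relator set `R`. -/
def IsDehnFunctionOf {X : Type*} (R : Set (FreeGroup X)) (δ : ℕ → ℕ) : Prop :=
  ∀ n, IsLeast {N | ∀ w ∈ Subgroup.normalClosure R, freeNorm w ≤ n → AreaLe R w N} (δ n)

/-- A group is metabelian if its derived subgroup is abelian. -/
def IsMetabelian (G : Type*) [Group G] : Prop :=
  ∀ a b : G, a ∈ commutator G → b ∈ commutator G → a * b = b * a

instance derivedSeriesNormalInst {G : Type*} [Group G] (n : ℕ) : (derivedSeries G n).Normal :=
  derivedSeries_normal G n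

/-- The free metabelian group on `X`: the free group modulo its second derived subgroup. -/
abbrev FreeMetabelian (X : Type*) := FreeGroup X ⧸ derivedSeries (FreeGroup X) 2

/-- The word length of `w` in the free metabelian group is at most `n`. -/
def mNormLe {X : Type*} (w : FreeMetabelian X) (n : ℕ) : Prop :=
  ∃ v : FreeGroup X, QuotientGroup.mk' (derivedSeries (FreeGroup X) 2) v = w ∧ freeNorm v ≤ n

/-- `δ` is the relative Dehn function (in the variety of metabelian groups) of the
relative presentation with relator set `R`. -/
def IsRelDehnFunctionOf {X : Type*} (R : Set (FreeMetabelian X)) (δ : ℕ → ℕ) : Prop :=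
  ∀ n, IsLeast {N | ∀ w ∈ Subgroup.normalClosure R, mNormLe w n → AreaLe R w N} (δ n)

/-- The paper's commutator convention: `[x, y] = x⁻¹ * y⁻¹ * x * y`. -/
def pcomm {G : Type*} [Group G] (x y : G) : G := x⁻¹ * y⁻¹ * x * y

/-- A group has torsion-free rank `k` if it has a finite-index subgroup isomorphic to `ℤ^k`. -/
def HasTFRank (Q : Type*) [Group Q] (k : ℕ) : Prop :=
  ∃ H : Subgroup Q, H.index ≠ 0 ∧ Nonempty (H ≃* Multiplicative (Fin k → ℤ))

/-- `G ⧸ A` is abelian and has torsion-free rank `j`. -/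
def QuotientRankProp {G : Type*} [Group G] (A : Subgroup G) [A.Normal] (j : ℕ) : Prop :=
  (∀ x y : G ⧸ A, x * y = y * x) ∧ HasTFRank (G ⧸ A) j

/-- The set of torsion-free ranks of quotients `G ⧸ A` by abelian normal subgroups `A`
with `G ⧸ A` abelian. -/
def abelianRankSet (G : Type*) [Group G] : Set ℕ :=
  {j | ∃ A : Subgroup G, ∃ h : A.Normal, (∀ x y : G, x ∈ A → y ∈ A → x * y = y * x) ∧
    @QuotientRankProp G _ A h j}

namespace WF

variable (r l k : ℕ)

/-- Generator `aᵢ` of `W_F`. -/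
def ga (i : Fin r) : FreeGroup (Fin r ⊕ Fin l ⊕ Fin k) := FreeGroup.of (Sum.inl i)

/-- Generator `tᵢ` of `W_F`. -/
def gt (i : Fin l) : FreeGroup (Fin r ⊕ Fin l ⊕ Fin k) := FreeGroup.of (Sum.inr (Sum.inl i))

/-- Generator `uᵢ` of `W_F`. -/
def gu (i : Fin k) : FreeGroup (Fin r ⊕ Fin l ⊕ Fin k) := FreeGroup.of (Sum.inr (Sum.inr i))

/-- The word `t₁^{α₁}⋯t_l^{α_l}`. -/
def tw (α : Fin l → ℕ) : FreeGroup (Fin r ⊕ Fin l ⊕ Fin k) :=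
  (List.ofFn fun s : Fin l => (gt r l k s) ^ (α s)).prod

/-- A tuple `α` is admissible for the conjugators of the third family of relators:
`0 ≤ α_s ≤ d_s` for `s ≤ k` and `0 ≤ α_s < m_s` for `s > k`. -/
def Adm (m : Fin l → ℕ) (d : Fin k → ℕ) (α : Fin l → ℕ) : Prop :=
  (∀ (s : Fin l) (hs : (s : ℕ) < k), α s ≤ d ⟨s, hs⟩) ∧
  (∀ s : Fin l, k ≤ (s : ℕ) → α s < m s)

/-- The defining relators of the group `W_F`. -/
def WFRel (hkl : k ≤ l) (m : Fin l → ℕ) (d : Fin k → ℕ) (c : Fin k → ℕ → ℤ) :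
    Set (FreeGroup (Fin r ⊕ Fin l ⊕ Fin k)) :=
  {w | (∃ i : Fin l, k ≤ (i : ℕ) ∧ w = (gt r l k i) ^ (m i)) ∨
       (∃ i j : Fin k, w = pcomm (gu r l k i) (gu r l k j)) ∨
       (∃ i j : Fin l, w = pcomm (gt r l k i) (gt r l k j)) ∨
       (∃ (i : Fin l) (j : Fin k), w = pcomm (gt r l k i) (gu r l k j)) ∨
       (∃ i j : Fin r, w = pcomm (ga r l k i) (ga r l k j)) ∨
       (∃ (i j : Fin r) (α β : Fin l → ℕ), Adm l k m d α ∧ Adm l k m d β ∧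
         w = pcomm ((tw r l k α)⁻¹ * ga r l k i * tw r l k α)
                   ((tw r l k β)⁻¹ * ga r l k j * tw r l k β)) ∨
       (∃ (i : Fin r) (j : Fin k),
         w = ((gu r l k j)⁻¹ * ga r l k i * gu r l k j)⁻¹ *
           (List.ofFn fun s : Fin (d j + 1) =>
             (gt r l k (Fin.castLE hkl j)) ^ (-(s : ℤ)) * (ga r l k i) ^ (c j s) *
             (gt r l k (Fin.castLE hkl j)) ^ ((s : ℕ) : ℤ)).prod)}

section AreaCalc

variable {G : Type*} [Group G] {R : Set G}

theorem areaLe_iff (w : G) (N : ℕ) : AreaLe R w N ↔ ∃ L : List G, L.length ≤ N ∧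
    (∀ x ∈ L, ∃ r f : G, (r ∈ R ∨ r⁻¹ ∈ R) ∧ x = f⁻¹ * r * f) ∧ w = L.prod := by
  constructor
  · rintro ⟨N', hN, r, f, hr, hw⟩
    refine ⟨List.ofFn fun i => (f i)⁻¹ * r i * f i, by simpa using hN, ?_, hw⟩
    intro x hx
    rw [List.mem_ofFn] at hx
    obtain ⟨i, rfl⟩ := hx
    exact ⟨r i, f i, hr i, rfl⟩
  · rintro ⟨L, hL, hx, rfl⟩
    have h : ∀ i : Fin L.length, ∃ r f : G, (r ∈ R ∨ r⁻¹ ∈ R) ∧ L.get i = f⁻¹ * r * f :=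
      fun i => hx _ (List.get_mem L i)
    choose r f h1 h2 using h
    refine ⟨L.length, hL, r, f, h1, ?_⟩
    have : (fun i => (f i)⁻¹ * r i * f i) = L.get := by
      funext i; exact (h2 i).symm
    rw [this, List.ofFn_get]

theorem al_one (N : ℕ) : AreaLe R (1 : G) N :=
  (areaLe_iff _ _).2 ⟨[], by simp, by simp, by simp⟩

theorem al_mono {w : G} {N M : ℕ} (h : AreaLe R w N) (hM : N ≤ M) : AreaLe R w M := by
  obtain ⟨a, h1, h2⟩ := h
  exact ⟨a, h1.trans hM, h2⟩

theorem al_mul {w v : G} {N M : ℕ} (h : AreaLe R w N) (h' : AreaLe R v M) :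
    AreaLe R (w * v) (N + M) := by
  rw [areaLe_iff] at *
  obtain ⟨L, h1, h2, rfl⟩ := h
  obtain ⟨L', h1', h2', rfl⟩ := h'
  refine ⟨L ++ L', by simp; omega, ?_, by simp⟩
  intro x hx
  rcases List.mem_append.1 hx with h | h
  · exact h2 x h
  · exact h2' x h

theorem al_inv {w : G} {N : ℕ} (h : AreaLe R w N) : AreaLe R w⁻¹ N := by
  rw [areaLe_iff] at *
  obtain ⟨L, h1, h2, rfl⟩ := h
  refine ⟨(L.map (·⁻¹)).reverse, by simpa using h1, ?_, by rw [List.prod_inv_reverse]⟩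
  intro x hx
  simp only [List.mem_reverse, List.mem_map] at hx
  obtain ⟨y, hy, rfl⟩ := hx
  obtain ⟨r, f, hr, rfl⟩ := h2 y hy
  refine ⟨r⁻¹, f, ?_, by group⟩
  rw [inv_inv]; tauto

theorem al_conj {w : G} {N : ℕ} (h : AreaLe R w N) (g : G) : AreaLe R (g⁻¹ * w * g) N := by
  rw [areaLe_iff] at *
  obtain ⟨L, h1, h2, rfl⟩ := h
  refine ⟨L.map (fun x => g⁻¹ * x * g), by simpa using h1, ?_, ?_⟩
  · intro x hx
    simp only [List.mem_map] at hx
    obtain ⟨y, hy, rfl⟩ := hx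
    obtain ⟨r, f, hr, rfl⟩ := h2 y hy
    exact ⟨r, f * g, hr, by group⟩
  · clear h1 h2
    induction L with
    | nil => simp
    | cons a L ih => simp only [List.prod_cons, List.map_cons, ← ih]; group

theorem al_conj_iff {w : G} {N : ℕ} (g : G) : AreaLe R (g⁻¹ * w * g) N ↔ AreaLe R w N := by
  refine ⟨fun h => ?_, fun h => al_conj h g⟩
  have := al_conj h g⁻¹
  convert this using 1
  group

theorem al_rel {w : G} (h : w ∈ R) : AreaLe R w 1 :=
  (areaLe_iff _ _).2 ⟨[w], by simp, by
    intro x hx; simp only [List.mem_singleton] at hx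
    exact ⟨w, 1, Or.inl h, by simp [hx]⟩, by simp⟩

theorem al_mem {w : G} {N : ℕ} (h : AreaLe R w N) : w ∈ Subgroup.normalClosure R := by
  rw [areaLe_iff] at h
  obtain ⟨L, -, h2, rfl⟩ := h
  apply Subgroup.list_prod_mem
  intro x hx
  obtain ⟨r, f, hr, rfl⟩ := h2 x hx
  have : r ∈ Subgroup.normalClosure R := by
    rcases hr with h | h
    · exact Subgroup.subset_normalClosure h
    · simpa using Subgroup.inv_mem _ (Subgroup.subset_normalClosure h)
  simpa using (Subgroup.normalClosure_normal (s := R)).conj_mem r this f⁻¹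

theorem al_pow {w : G} {N : ℕ} (h : AreaLe R w N) (n : ℕ) : AreaLe R (w ^ n) (n * N) := by
  induction n with
  | zero => simpa using al_one _
  | succ n ih => rw [pow_succ, Nat.succ_mul]; exact al_mul ih h

theorem al_zpow {w : G} {N : ℕ} (h : AreaLe R w N) (n : ℤ) :
    AreaLe R (w ^ n) (n.natAbs * N) := by
  obtain ⟨p, rfl | rfl⟩ := n.eq_nat_or_neg
  · simpa using al_pow h p
  · simpa using al_inv (al_pow h p)

/-- approximate equality -/
def Ap (R : Set G) (N : ℕ) (x y : G) : Prop := AreaLe R (x * y⁻¹) N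

theorem ap_refl (x : G) (N : ℕ) : Ap R N x x := by
  unfold Ap; rw [mul_inv_cancel]; exact al_one _

theorem ap_symm {x y : G} {N : ℕ} (h : Ap R N x y) : Ap R N y x := by
  have := al_inv h
  unfold Ap; convert this using 1; group

theorem ap_trans {x y z : G} {N M : ℕ} (h : Ap R N x y) (h' : Ap R M y z) :
    Ap R (N + M) x z := by
  have := al_mul h h'
  unfold Ap; convert this using 1; group

theorem ap_mono {x y : G} {N M : ℕ} (h : Ap R N x y) (hM : N ≤ M) : Ap R M x y := al_mono h hM

theorem ap_mul {x y x' y' : G} {N M : ℕ} (h : Ap R N x y) (h' : Ap R M x' y') :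
    Ap R (N + M) (x * x') (y * y') := by
  have := al_mul (al_conj h' x⁻¹) h
  unfold Ap; rw [add_comm]; convert this using 1; group

theorem ap_mull {x y : G} {N : ℕ} (z : G) (h : Ap R N x y) : Ap R N (z * x) (z * y) := by
  simpa using ap_mul (ap_refl z 0) h

theorem ap_mulr {x y : G} {N : ℕ} (z : G) (h : Ap R N x y) : Ap R N (x * z) (y * z) := by
  simpa using ap_mul h (ap_refl z 0)

theorem ap_inv {x y : G} {N : ℕ} (h : Ap R N x y) : Ap R N x⁻¹ y⁻¹ := by
  have := al_conj (ap_symm h) y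
  unfold Ap at *; convert this using 1; group

theorem ap_al {x y : G} {N M : ℕ} (h : Ap R N x y) (h' : AreaLe R y M) : AreaLe R x (N + M) := by
  have := al_mul h h'
  convert this using 1; group

theorem ap_one {x : G} {N : ℕ} : Ap R N x 1 ↔ AreaLe R x N := by simp [Ap]

theorem ap_list {ι : Type*} (L : List ι) (f g : ι → G) (N : ℕ) (h : ∀ x ∈ L, Ap R N (f x) (g x)) :
    Ap R (L.length * N) (L.map f).prod (L.map g).prod := by
  induction L with
  | nil => simpa using ap_refl _ _
  | cons a L ih =>
    have h1 := ap_mul (h a (by simp)) (ih (fun x hx => h x (by simp [hx])))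
    simp only [List.map_cons, List.prod_cons, List.length_cons]
    exact ap_mono h1 (by rw [Nat.succ_mul]; omega)

/-- approximate commutation -/
def Com (R : Set G) (N : ℕ) (x y : G) : Prop := Ap R N (x * y) (y * x)

theorem com_iff {N : ℕ} {x y : G} : Com R N x y ↔ AreaLe R (pcomm x y) N := by
  unfold Com Ap pcomm
  rw [← al_conj_iff (y * x)]
  have : (y * x)⁻¹ * (x * y * (y * x)⁻¹) * (y * x) = x⁻¹ * y⁻¹ * x * y := by group
  rw [this]

theorem com_symm {N : ℕ} {x y : G} (h : Com R N x y) : Com R N y x := ap_symm h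

theorem com_mono {x y : G} {N M : ℕ} (h : Com R N x y) (hM : N ≤ M) : Com R M x y := al_mono h hM

theorem com_conj {x y : G} {N : ℕ} (g : G) :
    Com R N (g⁻¹ * x * g) (g⁻¹ * y * g) ↔ Com R N x y := by
  rw [com_iff, com_iff, ← al_conj_iff (w := pcomm x y) g]
  have : pcomm (g⁻¹ * x * g) (g⁻¹ * y * g) = g⁻¹ * pcomm x y * g := by unfold pcomm; group
  rw [this]

theorem com_mulr {x y z : G} {N M : ℕ} (h : Com R N x y) (h' : Com R M x z) :
    Com R (N + M) x (y * z) := by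
  have h1 := ap_mulr z h
  have h2 := ap_mull y h'
  unfold Com
  have := ap_trans h1 (by rw [mul_assoc]; exact h2)
  simpa [mul_assoc] using this

theorem com_inv {x y : G} {N : ℕ} (h : Com R N x y) : Com R N x y⁻¹ := by
  have := ap_mull y⁻¹ (ap_mulr y⁻¹ h)
  unfold Com
  apply ap_symm
  simpa [mul_assoc] using this

theorem com_one (x : G) (N : ℕ) : Com R N x 1 := by
  unfold Com; simpa using ap_refl _ _

theorem com_list {x : G} (L : List G) {N : ℕ} (h : ∀ y ∈ L, Com R N x y) :
    Com R (L.length * N) x L.prod := by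
  induction L with
  | nil => simpa using com_one _ _
  | cons a L ih =>
    have := com_mulr (h a (by simp)) (ih (fun y hy => h y (by simp [hy])))
    simp only [List.prod_cons, List.length_cons]
    exact com_mono this (by rw [Nat.succ_mul]; omega)

theorem com_list2 (L' L : List G) {N : ℕ} (h : ∀ x ∈ L', ∀ y ∈ L, Com R N x y) :
    Com R (L'.length * (L.length * N)) L'.prod L.prod := by
  apply com_symm
  exact com_list _ (fun y hy => com_symm (com_list _ (h y hy)))

theorem com_ap {x y x' y' : G} {N M M' : ℕ} (h : Com R N x y) (hx : Ap R M x' x)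
    (hy : Ap R M' y' y) : Com R (N + 2 * M + 2 * M') x' y' := by
  have h1 := ap_mul hx hy
  have h2 := ap_mul (ap_symm hy) (ap_symm hx)
  exact ap_mono (ap_trans (ap_trans h1 h) h2) (by omega)

/-- sign twist -/
def sg (x : G) (b : Bool) : G := if b then x else x⁻¹

/-- sign -/
def sn (b : Bool) : ℤ := if b then 1 else -1

theorem sg_conj (x g : G) (b : Bool) : g⁻¹ * sg x b * g = sg (g⁻¹ * x * g) b := by
  cases b <;> simp [sg, mul_assoc]

theorem com_sg {x y : G} {N : ℕ} (h : Com R N x y) (b b' : Bool) : Com R N (sg x b) (sg y b') := by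
  have h1 : Com R N (sg x b) y := by
    cases b
    · exact com_symm (com_inv (com_symm h))
    · exact h
  cases b'
  · exact com_inv h1
  · exact h1

/-- key cancellation lemma -/
theorem cancel {ι κ : Type*} [DecidableEq κ] (g : ι → G) (key : ι → κ) (c : ℕ) :
    ∀ (n : ℕ) (L : List (ι × Bool)), L.length ≤ n →
    (∀ x ∈ L, ∀ y ∈ L, Com R c (g x.1) (g y.1)) →
    (∀ x ∈ L, ∀ y ∈ L, key x.1 = key y.1 → Ap R c (g x.1) (g y.1)) →
    (∀ q, (L.map (fun z => if key z.1 = q then sn z.2 else 0)).sum = 0) →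
    AreaLe R (L.map (fun z => sg (g z.1) z.2)).prod (n * n * c) := by
  intro n
  induction n using Nat.strong_induction_on with
  | _ n ih =>
  intro L hL hc hk hs
  cases L with
  | nil => simpa using al_one _
  | cons z L =>
    have hex : ∃ z' ∈ L, key z'.1 = key z.1 ∧ z'.2 ≠ z.2 := by
      by_contra hcon
      push Not at hcon
      have h0 := hs (key z.1)
      have : ∀ L' : List (ι × Bool), (∀ z' ∈ L', key z'.1 = key z.1 → z'.2 = z.2) →
          0 ≤ sn z.2 * (L'.map (fun z' => if key z'.1 = key z.1 then sn z'.2 else 0)).sum := by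
        intro L'
        induction L' with
        | nil => simp
        | cons a L' ih' =>
          intro h
          have h1 := ih' (fun z' hz' => h z' (by simp [hz']))
          simp only [List.map_cons, List.sum_cons, mul_add]
          have : 0 ≤ sn z.2 * (if key a.1 = key z.1 then sn a.2 else 0) := by
            split_ifs with hka
            · rw [h a (by simp) hka]; exact mul_self_nonneg _
            · simp
          omega
      have h1 := this L hcon
      simp only [List.map_cons, List.sum_cons, if_true] at h0
      have h2 : sn z.2 * sn z.2 = 1 := by cases z.2 <;> simp [sn]
      have h3 : sn z.2 * (sn z.2 + (L.map (fun z' => if key z'.1 = key z.1 then sn z'.2 else 0)).sum) = 0 := by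
        rw [h0, mul_zero]
      rw [mul_add] at h3
      omega
    obtain ⟨z', hz', hkey, hsg⟩ := hex
    obtain ⟨A, B, rfl⟩ := List.append_of_mem hz'
    simp only [List.length_cons, List.length_append] at hL
    have hAB := ih (n - 2) (by omega) (A ++ B) (by simp; omega)
      (fun x hx y hy => hc x (by simp at hx ⊢; tauto) y (by simp at hy ⊢; tauto))
      (fun x hx y hy => hk x (by simp at hx ⊢; tauto) y (by simp at hy ⊢; tauto))
      (by
        intro q
        have := hs q
        simp only [List.map_cons, List.map_append, List.sum_cons, List.sum_append] at this ⊢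
        rw [hkey] at this
        have h2 : (if key z.1 = q then sn z.2 else 0) + (if key z.1 = q then sn z'.2 else 0) = 0 := by
          split_ifs
          · revert hsg; cases z.2 <;> cases z'.2 <;> simp [sn]
          · simp
        omega)
    have hcz : Com R (A.length * c) (sg (g z.1) z.2) (A.map (fun z => sg (g z.1) z.2)).prod := by
      have := com_list (R := R) (x := sg (g z.1) z.2) (A.map (fun z => sg (g z.1) z.2)) (N := c) (by
        intro y hy
        simp only [List.mem_map] at hy
        obtain ⟨a, ha, rfl⟩ := hy
        exact com_sg (hc z (by simp) a (by simp [ha])) _ _)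
      simpa using this
    have hcc : AreaLe R (sg (g z.1) z.2 * sg (g z'.1) z'.2) c := by
      have h1 := hk z (by simp) z' (by simp) hkey.symm
      revert hsg
      cases z.2 <;> cases z'.2 <;> simp [sg]
      · have h3 := ap_inv h1
        unfold Ap at h3
        simpa using h3
      · exact h1
    simp only [List.map_cons, List.map_append, List.prod_cons, List.prod_append] at hAB ⊢
    set P := (A.map (fun z => sg (g z.1) z.2)).prod
    set Q := (B.map (fun z => sg (g z.1) z.2)).prod
    have e1 : Ap R (A.length * c) (sg (g z.1) z.2 * (P * (sg (g z'.1) z'.2 * Q)))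
      (P * (sg (g z.1) z.2 * sg (g z'.1) z'.2) * Q) := by
      have := ap_mulr (sg (g z'.1) z'.2 * Q) hcz
      simpa [mul_assoc] using this
    have e2 : Ap R c (P * (sg (g z.1) z.2 * sg (g z'.1) z'.2) * Q) (P * Q) := by
      have := ap_mulr Q (ap_mull P (ap_one.2 hcc))
      simpa using this
    refine al_mono (ap_al (ap_trans e1 e2) hAB) ?_
    obtain ⟨p, rfl⟩ : ∃ p, n = p + 2 := ⟨n - 2, by omega⟩
    have : A.length ≤ p := by omega
    simp only [Nat.add_sub_cancel]
    nlinarith [Nat.mul_le_mul_right c this, Nat.zero_le (p * c)]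

end AreaCalc

section QWords

variable {r l k}

/-- generators of the abelian part -/
def gy (r : ℕ) {l k : ℕ} (y : Fin l ⊕ Fin k) : FreeGroup (Fin r ⊕ Fin l ⊕ Fin k) :=
  FreeGroup.of (Sum.inr y)

/-- exponent sum -/
def E (y : Fin l ⊕ Fin k) (g : FreeGroup (Fin r ⊕ Fin l ⊕ Fin k)) : ℤ :=
  Multiplicative.toAdd (FreeGroup.lift (fun x => Multiplicative.ofAdd
    (if x = Sum.inr y then (1 : ℤ) else 0)) g)

@[simp] theorem E_one (y : Fin l ⊕ Fin k) :
    E y (1 : FreeGroup (Fin r ⊕ Fin l ⊕ Fin k)) = 0 := by simp [E]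

@[simp] theorem E_mul (y : Fin l ⊕ Fin k) (g h : FreeGroup (Fin r ⊕ Fin l ⊕ Fin k)) :
    E y (g * h) = E y g + E y h := by simp [E]

@[simp] theorem E_inv (y : Fin l ⊕ Fin k) (g : FreeGroup (Fin r ⊕ Fin l ⊕ Fin k)) :
    E y g⁻¹ = - E y g := by simp [E]

@[simp] theorem E_pow (y : Fin l ⊕ Fin k) (g : FreeGroup (Fin r ⊕ Fin l ⊕ Fin k)) (n : ℕ) :
    E y (g ^ n) = n * E y g := by simp [E]

@[simp] theorem E_zpow (y : Fin l ⊕ Fin k) (g : FreeGroup (Fin r ⊕ Fin l ⊕ Fin k)) (n : ℤ) :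
    E y (g ^ n) = n * E y g := by simp [E]

@[simp] theorem E_gy (y y' : Fin l ⊕ Fin k) : E y (gy r y') = if y' = y then 1 else 0 := by
  simp [E, gy]

@[simp] theorem E_ga (y : Fin l ⊕ Fin k) (i : Fin r) : E y (ga r l k i) = 0 := by
  simp [E, ga]

theorem gt_eq (s : Fin l) : gt r l k s = gy r (Sum.inl s) := rfl
theorem gu_eq (s : Fin k) : gu r l k s = gy r (Sum.inr s) := rfl

theorem E_list {ι : Type*} (y : Fin l ⊕ Fin k) (L : List ι)
    (f : ι → FreeGroup (Fin r ⊕ Fin l ⊕ Fin k)) :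
    E y (L.map f).prod = (L.map (fun x => E y (f x))).sum := by
  induction L with
  | nil => simp
  | cons a L ih => simp [ih]

/-- words in the `t` and `u` letters -/
def QLen (g : FreeGroup (Fin r ⊕ Fin l ⊕ Fin k)) (n : ℕ) : Prop :=
  ∃ p : List ((Fin l ⊕ Fin k) × Bool), p.length ≤ n ∧ g = (p.map (fun z => sg (gy r z.1) z.2)).prod

theorem ql_one (n : ℕ) : QLen (1 : FreeGroup (Fin r ⊕ Fin l ⊕ Fin k)) n := ⟨[], by simp, by simp⟩

theorem ql_mono {g : FreeGroup (Fin r ⊕ Fin l ⊕ Fin k)} {n n' : ℕ} (h : QLen g n) (hn : n ≤ n') :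
    QLen g n' := by
  obtain ⟨p, h1, h2⟩ := h
  exact ⟨p, h1.trans hn, h2⟩

theorem ql_mul {g h : FreeGroup (Fin r ⊕ Fin l ⊕ Fin k)} {n n' : ℕ} (hg : QLen g n)
    (hh : QLen h n') : QLen (g * h) (n + n') := by
  obtain ⟨p, h1, rfl⟩ := hg
  obtain ⟨q, h2, rfl⟩ := hh
  exact ⟨p ++ q, by simp; omega, by simp⟩

theorem ql_inv {g : FreeGroup (Fin r ⊕ Fin l ⊕ Fin k)} {n : ℕ} (hg : QLen g n) : QLen g⁻¹ n := by
  obtain ⟨p, h1, rfl⟩ := hg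
  refine ⟨(p.map (fun z => (z.1, !z.2))).reverse, by simpa using h1, ?_⟩
  rw [List.prod_inv_reverse, List.map_reverse, List.map_map, List.map_map]
  congr 2
  apply List.map_congr_left
  rintro ⟨y, b⟩ -
  cases b <;> simp [sg]

theorem ql_gy (y : Fin l ⊕ Fin k) : QLen (gy r y) 1 := ⟨[(y, true)], by simp, by simp [sg]⟩

theorem ql_pow {g : FreeGroup (Fin r ⊕ Fin l ⊕ Fin k)} {n : ℕ} (hg : QLen g n) (e : ℕ) :
    QLen (g ^ e) (e * n) := by
  induction e with
  | zero => simpa using ql_one _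
  | succ e ih => rw [pow_succ, Nat.succ_mul]; exact ql_mul ih hg

theorem ql_zpow {g : FreeGroup (Fin r ⊕ Fin l ⊕ Fin k)} {n : ℕ} (hg : QLen g n) (e : ℤ) :
    QLen (g ^ e) (e.natAbs * n) := by
  obtain ⟨p, rfl | rfl⟩ := e.eq_nat_or_neg
  · simpa using ql_pow hg p
  · simpa using ql_inv (ql_pow hg p)

theorem ql_list {ι : Type*} (L : List ι) (f : ι → FreeGroup (Fin r ⊕ Fin l ⊕ Fin k)) (n : ℕ)
    (h : ∀ x ∈ L, QLen (f x) n) : QLen (L.map f).prod (L.length * n) := by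
  induction L with
  | nil => simpa using ql_one _
  | cons a L ih =>
    simp only [List.map_cons, List.prod_cons, List.length_cons]
    exact ql_mono (ql_mul (h a (by simp)) (ih (fun x hx => h x (by simp [hx]))))
      (by rw [Nat.succ_mul]; omega)

theorem E_sg (y : Fin l ⊕ Fin k) (g : FreeGroup (Fin r ⊕ Fin l ⊕ Fin k)) (b : Bool) :
    E y (sg g b) = sn b * E y g := by
  cases b <;> simp [sg, sn]

theorem E_le {g : FreeGroup (Fin r ⊕ Fin l ⊕ Fin k)} {n : ℕ} (h : QLen g n)
    (y : Fin l ⊕ Fin k) : |E y g| ≤ n := by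
  obtain ⟨p, h1, rfl⟩ := h
  have : |E y (p.map (fun z => sg (gy r z.1) z.2)).prod| ≤ p.length := by
    clear h1
    induction p with
    | nil => simp
    | cons a p ih =>
      simp only [List.map_cons, List.prod_cons, E_mul, List.length_cons]
      have : |E y (sg (gy r a.1) a.2)| ≤ 1 := by
        rw [E_sg, E_gy]
        cases a.2 <;> split_ifs <;> simp [sn]
      have h3 := abs_add_le (E y (sg (gy r a.1) a.2)) (E y (p.map (fun z => sg (gy r z.1) z.2)).prod)
      push_cast
      linarith
  have h2 : (p.length : ℤ) ≤ n := by exact_mod_cast h1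
  linarith

variable {hkl : k ≤ l} {m : Fin l → ℕ} {d : Fin k → ℕ} {c : Fin k → ℕ → ℤ}

theorem com_gy (y y' : Fin l ⊕ Fin k) :
    Com (WFRel r l k hkl m d c) 1 (gy r y) (gy r y') := by
  rcases y with s | s <;> rcases y' with s' | s'
  · exact com_iff.2 (al_rel (Or.inr (Or.inr (Or.inl ⟨s, s', rfl⟩))))
  · exact com_iff.2 (al_rel (Or.inr (Or.inr (Or.inr (Or.inl ⟨s, s', rfl⟩)))))
  · exact com_symm (com_iff.2 (al_rel (Or.inr (Or.inr (Or.inr (Or.inl ⟨s', s, rfl⟩))))))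
  · exact com_iff.2 (al_rel (Or.inr (Or.inl ⟨s, s', rfl⟩)))

theorem q_zero {g : FreeGroup (Fin r ⊕ Fin l ⊕ Fin k)} {n : ℕ} (h : QLen g n)
    (hE : ∀ y, E y g = 0) : AreaLe (WFRel r l k hkl m d c) g (n * n) := by
  obtain ⟨p, h1, rfl⟩ := h
  have := cancel (R := WFRel r l k hkl m d c) (gy r) id 1 n p h1 (fun x _ y _ => com_gy _ _)
    (fun x _ y _ h => by simp only [id] at h; rw [h]; exact ap_refl _ _)
    (fun q => by
      have := hE q
      rw [E_list] at this
      refine Eq.trans ?_ this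
      congr 1
      apply List.map_congr_left
      intro z _
      rw [E_sg, E_gy]
      simp)
  simpa using this

/-- orders -/
def mu (m : Fin l → ℕ) : Fin l ⊕ Fin k → ℕ :=
  Sum.elim (fun s => if (s : ℕ) < k then 0 else m s) (fun _ => 0)

theorem al_mu (y : Fin l ⊕ Fin k) : AreaLe (WFRel r l k hkl m d c) (gy r y ^ mu m y) 1 := by
  rcases y with s | s
  · by_cases h : (s : ℕ) < k
    · simpa [mu, h] using al_one _
    · simp only [mu, Sum.elim_inl, h, if_false]
      exact al_rel (Or.inl ⟨s, by omega, rfl⟩)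
  · simpa [mu] using al_one _

/-- constant of the quadratic bound -/
def KQ (l k : ℕ) : ℕ := (1 + (l + k)) * (1 + (l + k)) + (l + k)

theorem q_triv {g : FreeGroup (Fin r ⊕ Fin l ⊕ Fin k)} {n : ℕ} (h : QLen g n)
    (hE : ∀ y, (mu m y : ℤ) ∣ E y g) :
    AreaLe (WFRel r l k hkl m d c) g (KQ l k * (n * n)) := by
  set L : List (Fin l ⊕ Fin k) := Finset.univ.toList with hL
  have hlen : L.length = l + k := by simp [hL]
  set h0 := (L.map (fun y => gy r y ^ (E y g))).prod with hh0
  have hq : QLen h0 ((l + k) * n) := by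
    rw [← hlen]
    apply ql_list
    intro y _
    refine ql_mono (ql_zpow (ql_gy y) (E y g)) ?_
    have := E_le h y
    rw [Int.abs_eq_natAbs] at this
    omega
  have hEh : ∀ y, E y h0 = E y g := by
    intro y
    rw [hh0, E_list]
    simp only [E_zpow, E_gy, mul_ite, mul_one, mul_zero]
    rw [hL, Finset.sum_map_toList]
    simp
  have ha : AreaLe (WFRel r l k hkl m d c) h0 ((l + k) * n) := by
    rw [← ap_one, ← hlen]
    have := ap_list (R := WFRel r l k hkl m d c) L (fun y => gy r y ^ (E y g)) (fun _ => 1) n (by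
      intro y _
      rw [ap_one]
      obtain ⟨q, hq⟩ := hE y
      rw [hq, zpow_mul]
      by_cases h0 : mu m y = 0
      · simpa [h0] using al_one _
      · have h2 := al_zpow (al_mu (r := r) (hkl := hkl) (m := m) (d := d) (c := c) y) q
        rw [zpow_natCast]
        refine al_mono h2 ?_
        have h3 := E_le h y
        rw [hq, abs_mul] at h3
        have h5 : (1 : ℤ) ≤ |(mu m y : ℤ)| := by
          rw [Nat.abs_cast]; exact_mod_cast Nat.one_le_iff_ne_zero.2 h0
        have h4 : |q| ≤ n := by nlinarith [abs_nonneg q]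
        rw [Int.abs_eq_natAbs] at h4
        omega)
    simpa using this
  have h1 := q_zero (hkl := hkl) (m := m) (d := d) (c := c) (ql_mul h (ql_inv hq)) (by
    intro y; rw [E_mul, E_inv, hEh]; ring)
  have h2 := al_mul h1 ha
  rw [inv_mul_cancel_right] at h2
  refine al_mono h2 ?_
  unfold KQ
  rcases Nat.eq_zero_or_pos n with rfl | hn
  · simp
  · have : (l + k) * n ≤ (l + k) * (n * n) := Nat.mul_le_mul_left _ (by nlinarith)
    have e : (n + (l + k) * n) * (n + (l + k) * n) = (1 + (l + k)) * (1 + (l + k)) * (n * n) := by ring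
    rw [e, add_mul ((1 + (l + k)) * (1 + (l + k)))]
    omega

theorem q_eq {g h : FreeGroup (Fin r ⊕ Fin l ⊕ Fin k)} {n n' : ℕ} (hg : QLen g n) (hh : QLen h n')
    (hE : ∀ y, (mu m y : ℤ) ∣ E y g - E y h) :
    Ap (WFRel r l k hkl m d c) (KQ l k * ((n + n') * (n + n'))) g h := by
  apply q_triv (ql_mul hg (ql_inv hh))
  intro y
  rw [E_mul, E_inv]
  exact hE y

/-- conjugated generator -/
def cj (i : Fin r) (g : FreeGroup (Fin r ⊕ Fin l ⊕ Fin k)) : FreeGroup (Fin r ⊕ Fin l ⊕ Fin k) :=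
  g⁻¹ * ga r l k i * g

theorem cj_one (i : Fin r) : cj i (1 : FreeGroup (Fin r ⊕ Fin l ⊕ Fin k)) = ga r l k i := by
  simp [cj]

theorem cj_conj (i : Fin r) (g h : FreeGroup (Fin r ⊕ Fin l ⊕ Fin k)) :
    h⁻¹ * cj i g * h = cj i (g * h) := by
  simp [cj, mul_assoc]

@[simp] theorem E_cj (y : Fin l ⊕ Fin k) (i : Fin r) (g : FreeGroup (Fin r ⊕ Fin l ⊕ Fin k)) :
    E y (cj i g) = 0 := by
  simp [cj]

theorem cj_ap {R : Set (FreeGroup (Fin r ⊕ Fin l ⊕ Fin k))} {N : ℕ} (i : Fin r)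
    {g h : FreeGroup (Fin r ⊕ Fin l ⊕ Fin k)} (H : Ap R N g h) :
    Ap R (2 * N) (cj i g) (cj i h) := by
  have := ap_mul (ap_mulr (ga r l k i) (ap_inv H)) H
  rw [two_mul]; exact this

end QWords

section Commutators

variable {r l k}

/-- middle terms of the expansion -/
def mid (n : ℕ) (f : ℕ → ℤ) : List (ℕ × Bool) :=
  (List.range' 1 (n - 1)).flatMap (fun s => List.replicate (f s).natAbs (s, decide (0 ≤ f s)))

theorem mid_prod {G : Type*} [Group G] (n : ℕ) (f : ℕ → ℤ) (x : ℕ → G) :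
    ((mid n f).map (fun z => sg (x z.1) z.2)).prod =
      ((List.range' 1 (n - 1)).map (fun s => x s ^ f s)).prod := by
  unfold mid
  induction (List.range' 1 (n - 1)) with
  | nil => simp
  | cons s L ih =>
    simp only [List.flatMap_cons, List.map_append, List.prod_append, ih, List.map_cons,
      List.prod_cons, List.map_replicate, List.prod_replicate]
    congr 1
    by_cases h : 0 ≤ f s
    · simp only [h, decide_true, sg, if_true]
      rw [← zpow_natCast, Int.natAbs_of_nonneg h]
    · simp only [h, decide_false, sg]
      rw [← zpow_natCast, Int.ofNat_natAbs_of_nonpos (by omega)]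
      simp

theorem mid_mem {n : ℕ} {f : ℕ → ℤ} {z : ℕ × Bool} (h : z ∈ mid n f) : 1 ≤ z.1 ∧ z.1 + 1 ≤ n := by
  unfold mid at h
  simp only [List.mem_flatMap, List.mem_range'_1, List.mem_replicate] at h
  obtain ⟨s, hs, -, rfl⟩ := h
  simp only
  omega

theorem full_prod {G : Type*} [Group G] (n : ℕ) (hn : 1 ≤ n) (f : ℕ → ℤ) (h0 : f 0 = 1)
    (h1 : f n = 1) (x : ℕ → G) :
    (List.ofFn (fun s : Fin (n + 1) => x s ^ f s)).prod =
      x 0 * ((mid n f).map (fun z => sg (x z.1) z.2)).prod * x n := by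
  have e : List.ofFn (fun s : Fin (n + 1) => x s ^ f s) =
      (List.range (n + 1)).map (fun s => x s ^ f s) := by
    apply List.ext_getElem <;> simp [-List.ofFn_succ]
  rw [e, mid_prod]
  obtain ⟨p, rfl⟩ : ∃ p, n = p + 1 := ⟨n - 1, by omega⟩
  rw [List.range_succ, List.map_append, List.prod_append, List.range_eq_range']
  rw [show List.range' 0 (p + 1) = 0 :: List.range' 1 p from List.range'_succ ..]
  simp [h0, h1]

/-- the `t` letter paired with `u_j` -/
def tj (r : ℕ) {l k : ℕ} (hkl : k ≤ l) (j : Fin k) : FreeGroup (Fin r ⊕ Fin l ⊕ Fin k) :=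
  gy r (Sum.inl (Fin.castLE hkl j))

variable {hkl : k ≤ l} {m : Fin l → ℕ} {d : Fin k → ℕ} {c : Fin k → ℕ → ℤ}

theorem expand (hd : ∀ i, 1 ≤ d i) (hc0 : ∀ i, c i 0 = 1) (hcd : ∀ i, c i (d i) = 1)
    (i : Fin r) (j : Fin k) (g : FreeGroup (Fin r ⊕ Fin l ⊕ Fin k)) :
    Ap (WFRel r l k hkl m d c) 1 (cj i (gu r l k j * g))
      (cj i g * ((mid (d j) (c j)).map (fun z => sg (cj i (tj r hkl j ^ z.1 * g)) z.2)).prod *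
        cj i (tj r hkl j ^ (d j) * g)) := by
  have h : ((gu r l k j)⁻¹ * ga r l k i * gu r l k j)⁻¹ *
           (List.ofFn fun s : Fin (d j + 1) =>
             (gt r l k (Fin.castLE hkl j)) ^ (-(s : ℤ)) * (ga r l k i) ^ (c j s) *
             (gt r l k (Fin.castLE hkl j)) ^ ((s : ℕ) : ℤ)).prod ∈ WFRel r l k hkl m d c :=
    Or.inr (Or.inr (Or.inr (Or.inr (Or.inr (Or.inr ⟨i, j, rfl⟩)))))
  have e : (List.ofFn fun s : Fin (d j + 1) =>
             (gt r l k (Fin.castLE hkl j)) ^ (-(s : ℤ)) * (ga r l k i) ^ (c j s) *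
             (gt r l k (Fin.castLE hkl j)) ^ ((s : ℕ) : ℤ)) =
      (List.ofFn fun s : Fin (d j + 1) => (cj i (tj r hkl j ^ (s : ℕ))) ^ (c j s)) := by
    congr 1
    funext s
    unfold cj tj
    rw [gt_eq]
    have := conj_zpow (a := (gy r (Sum.inl (Fin.castLE hkl j)) ^ (s : ℕ))⁻¹) (b := ga r l k i) (i := c j s)
    rw [inv_inv] at this
    rw [this]
    simp
  rw [e, full_prod (d j) (hd j) (c j) (hc0 j) (hcd j) (fun s => cj i (tj r hkl j ^ s))] at h
  set P := cj i (tj r hkl j ^ 0) * ((mid (d j) (c j)).map (fun z => sg (cj i (tj r hkl j ^ z.1)) z.2)).prod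
    * cj i (tj r hkl j ^ d j) with hP
  have h1 : Ap (WFRel r l k hkl m d c) 1 (cj i (gu r l k j)) P := by
    have h2 := al_conj (al_inv (al_rel h)) P⁻¹
    unfold Ap
    convert h2 using 1
    unfold cj; group
  have h2 := ap_mull g⁻¹ (ap_mulr g h1)
  have e1 : g⁻¹ * (cj i (gu r l k j) * g) = cj i (gu r l k j * g) := by
    rw [← mul_assoc, cj_conj]
  have e2 : g⁻¹ * (P * g) = cj i g * ((mid (d j) (c j)).map (fun z => sg (cj i (tj r hkl j ^ z.1 * g)) z.2)).prod *
        cj i (tj r hkl j ^ (d j) * g) := by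
    have e3 : ((mid (d j) (c j)).map (fun z => sg (cj i (tj r hkl j ^ z.1 * g)) z.2)).prod =
      g⁻¹ * ((mid (d j) (c j)).map (fun z => sg (cj i (tj r hkl j ^ z.1)) z.2)).prod * g := by
      induction mid (d j) (c j) with
      | nil => simp
      | cons a L ih =>
        rw [List.map_cons, List.prod_cons, ih, ← cj_conj, ← sg_conj, List.map_cons, List.prod_cons]
        generalize (List.map (fun z => sg (cj i (tj r hkl j ^ z.1)) z.2) L).prod = q
        generalize sg (cj i (tj r hkl j ^ a.1)) a.2 = q'
        group
    rw [e3, hP, ← cj_conj i _ g, pow_zero, cj_one]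
    unfold cj
    group
  rw [e1, e2] at h2
  exact h2

/-- number of terms constant -/
def LL (d : Fin k → ℕ) (c : Fin k → ℕ → ℤ) : ℕ := 2 + ∑ j, (mid (d j) (c j)).length

/-- total degree -/
def dd (d : Fin k → ℕ) : ℕ := ∑ j, d j

theorem le_LL (j : Fin k) : (mid (d j) (c j)).length + 2 ≤ LL d c := by
  have := Finset.single_le_sum (f := fun j => (mid (d j) (c j)).length) (fun _ _ => Nat.zero_le _)
    (Finset.mem_univ j)
  unfold LL; omega

theorem le_dd (j : Fin k) : d j ≤ dd d :=
  Finset.single_le_sum (f := d) (fun _ _ => Nat.zero_le _) (Finset.mem_univ j)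

/-- the commutator bound -/
def CB (r : ℕ) {l k : ℕ} (hkl : k ≤ l) (m : Fin l → ℕ) (d : Fin k → ℕ) (c : Fin k → ℕ → ℤ)
    (D : Fin k → ℕ) (X N : ℕ) : Prop :=
  ∀ (i i' : Fin r) (g : FreeGroup (Fin r ⊕ Fin l ⊕ Fin k)), QLen g X →
    (∀ j, E (Sum.inr j) g = 0) → (∀ j : Fin k, |E (Sum.inl (Fin.castLE hkl j)) g| ≤ D j) →
    Com (WFRel r l k hkl m d c) N (ga r l k i) (cj i' g)

theorem cb_mono {D : Fin k → ℕ} {X N N' : ℕ} (h : CB r hkl m d c D X N) (hN : N ≤ N') :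
    CB r hkl m d c D X N' := fun i i' g a b e => com_mono (h i i' g a b e) hN

theorem tw_eq (α : Fin l → ℕ) :
    tw r l k α = ((List.finRange l).map (fun s => gy r (Sum.inl s : Fin l ⊕ Fin k) ^ α s)).prod := by
  unfold tw; rw [List.ofFn_eq_map]; rfl

theorem E_tw_inl (α : Fin l → ℕ) (s : Fin l) : E (Sum.inl s) (tw r l k α) = α s := by
  rw [tw_eq, E_list, ← List.ofFn_eq_map, List.sum_ofFn]
  simp

theorem E_tw_inr (α : Fin l → ℕ) (s : Fin k) : E (Sum.inr s) (tw r l k α) = 0 := by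
  rw [tw_eq, E_list, ← List.ofFn_eq_map, List.sum_ofFn]
  simp

/-- bound on admissible exponents -/
def BB (m : Fin l → ℕ) (d : Fin k → ℕ) : ℕ := ∑ j, d j + ∑ s, m s

theorem ql_tw {α : Fin l → ℕ} (h : Adm l k m d α) : QLen (tw r l k α) (l * BB m d) := by
  rw [tw_eq]
  have := ql_list (List.finRange l) (fun s => gy r (Sum.inl s : Fin l ⊕ Fin k) ^ α s) (BB m d) (by
    intro s _
    refine ql_mono (ql_pow (ql_gy _) _) ?_
    rw [mul_one]
    by_cases hs : (s : ℕ) < k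
    · have h1 := h.1 s hs
      have h2 := Finset.single_le_sum (f := d) (fun _ _ => Nat.zero_le _) (Finset.mem_univ ⟨s, hs⟩)
      unfold BB; omega
    · have h1 := h.2 s (by omega)
      have h2 := Finset.single_le_sum (f := m) (fun _ _ => Nat.zero_le _) (Finset.mem_univ s)
      unfold BB; omega)
  simpa using this

/-- base cost -/
def Bs (m : Fin l → ℕ) (d : Fin k → ℕ) (X : ℕ) : ℕ :=
  1 + 4 * (KQ l k * ((X + 2 * (l * BB m d)) * (X + 2 * (l * BB m d))))

theorem cb_base (hm : ∀ i : Fin l, k ≤ (i : ℕ) → 1 ≤ m i) (X : ℕ) :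
    CB r hkl m d c d X (Bs m d X) := by
  intro i i' g hq hu ht
  set α : Fin l → ℕ := fun s => if (s : ℕ) < k then (- E (Sum.inl s) g).toNat else 0 with hα
  set β : Fin l → ℕ := fun s => if (s : ℕ) < k then (E (Sum.inl s) g).toNat else
    (E (Sum.inl s) g % (m s : ℤ)).toNat with hβ
  have ht' : ∀ (s : Fin l) (hs : (s : ℕ) < k), |E (Sum.inl s) g| ≤ d ⟨s, hs⟩ := fun s hs => ht ⟨s, hs⟩
  have hmod : ∀ s : Fin l, k ≤ (s : ℕ) →
      0 ≤ E (Sum.inl s) g % (m s : ℤ) ∧ E (Sum.inl s) g % (m s : ℤ) < m s := by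
    intro s hs
    have : (0 : ℤ) < m s := by exact_mod_cast hm s hs
    exact ⟨Int.emod_nonneg _ this.ne', Int.emod_lt_of_pos _ this⟩
  have hA : Adm l k m d α := by
    constructor
    · intro s hs
      have := abs_le.1 (ht' s hs)
      simp only [hα, hs, if_true]
      omega
    · intro s hs
      have := hm s hs
      simp only [hα, not_lt.2 hs, if_false]
      omega
  have hB : Adm l k m d β := by
    constructor
    · intro s hs
      have := abs_le.1 (ht' s hs)
      simp only [hβ, hs, if_true]
      omega
    · intro s hs
      have := hmod s hs
      simp only [hβ, not_lt.2 hs, if_false]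
      omega
  have h1 : Com (WFRel r l k hkl m d c) 1 (ga r l k i) (cj i' (tw r l k β * (tw r l k α)⁻¹)) := by
    rw [← com_conj (tw r l k α), cj_conj, inv_mul_cancel_right]
    exact com_iff.2 (al_rel (Or.inr (Or.inr (Or.inr (Or.inr (Or.inr (Or.inl
      ⟨i, i', α, β, hA, hB, rfl⟩)))))))
  have h2 : Ap (WFRel r l k hkl m d c) _ g (tw r l k β * (tw r l k α)⁻¹) :=
    q_eq hq (ql_mul (ql_tw hB) (ql_inv (ql_tw hA))) (by
      rintro (s | s)
      · rw [E_mul, E_inv, E_tw_inl, E_tw_inl]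
        by_cases hs : (s : ℕ) < k
        · have : E (Sum.inl s) g - ((β s : ℤ) + -(α s : ℤ)) = 0 := by
            simp only [hα, hβ, hs, if_true]; omega
          rw [this]; exact dvd_zero _
        · have h3 := hmod s (by omega)
          have : (β s : ℤ) = E (Sum.inl s) g % (m s : ℤ) := by
            simp only [hβ, hs, if_false]; omega
          simp only [mu, Sum.elim_inl, hs, if_false, this, hα]
          have := Int.mul_ediv_add_emod (E (Sum.inl s) g) (m s)
          refine ⟨E (Sum.inl s) g / m s, ?_⟩
          push_cast
          linarith
      · rw [E_mul, E_inv, E_tw_inr, E_tw_inr, hu]; simp)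
  refine com_mono (com_ap h1 (ap_refl _ 0) (cj_ap i' h2)) ?_
  unfold Bs
  rw [two_mul (l * BB m d)]
  omega

/-- growth constant -/
def K2 (d : Fin k → ℕ) (c : Fin k → ℕ → ℤ) : ℕ := 5 + 3 * (LL d c * LL d c)

theorem cb_step (hd : ∀ i, 1 ≤ d i) (hc0 : ∀ i, c i 0 = 1) (hcd : ∀ i, c i (d i) = 1)
    {D : Fin k → ℕ} {X N : ℕ} (hN : 1 ≤ N) (j : Fin k) (hD : d j ≤ D j)
    (h : CB r hkl m d c D (X + (3 * dd d + 2)) N) :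
    CB r hkl m d c (Function.update D j (D j + 1)) X (K2 d c * N) := by
  have pos : ∀ (i i' : Fin r) (g : FreeGroup (Fin r ⊕ Fin l ⊕ Fin k)), QLen g X →
    (∀ j, E (Sum.inr j) g = 0) →
    (∀ j' : Fin k, j' ≠ j → |E (Sum.inl (Fin.castLE hkl j')) g| ≤ D j') →
    E (Sum.inl (Fin.castLE hkl j)) g = D j + 1 →
    Com (WFRel r l k hkl m d c) (K2 d c * N) (ga r l k i) (cj i' g) := by
    intro i i' g hq hu ho hj
    have hdj := le_dd (d := d) j
    have hL := le_LL (d := d) (c := c) j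
    set t := tj r hkl j with ht
    have htl : QLen t 1 := ql_gy _
    have hEt : ∀ j' : Fin k, E (Sum.inl (Fin.castLE hkl j')) t = if j = j' then 1 else 0 := by
      intro j'
      simp [ht, tj, Fin.ext_iff]
    have hEtu : ∀ j' : Fin k, E (Sum.inr j') t = 0 := by
      intro j'; simp [ht, tj]
    set u := gu r l k j with hu'
    have hul : QLen u 1 := ql_gy _
    set R := WFRel r l k hkl m d c
    have key : ∀ s s' : ℕ, s ≤ d j → s' ≤ d j → s' < d j + s →
        Com R N (cj i (t ^ s)) (cj i' (t ^ s' * ((t ^ d j)⁻¹ * g))) := by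
      intro s s' hs hs' hss
      have := h i i' (t ^ s' * ((t ^ d j)⁻¹ * g) * (t ^ s)⁻¹) (by
          refine ql_mono (ql_mul (ql_mul (ql_pow htl s') (ql_mul (ql_inv (ql_pow htl (d j))) hq))
            (ql_inv (ql_pow htl s))) ?_
          omega)
        (by intro j'; simp [hEtu, hu])
        (by
          intro j'
          simp only [E_mul, E_inv, E_pow, hEt]
          by_cases hjj : j = j'
          · subst hjj
            rw [hj]
            simp only [if_true, abs_le]
            omega
          · simp only [hjj, if_false]
            simpa using ho j' (Ne.symm hjj))
      rw [← com_conj (t ^ s), cj_conj, inv_mul_cancel_right] at this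
      exact this
    -- the conjugated relation
    have h0 : Com R N (cj i u) (cj i' (u * ((t ^ d j)⁻¹ * g))) := by
      have := h i i' (u * ((t ^ d j)⁻¹ * g) * u⁻¹) (by
          refine ql_mono (ql_mul (ql_mul hul (ql_mul (ql_inv (ql_pow htl (d j))) hq))
            (ql_inv hul)) ?_
          omega)
        (by intro j'; simp [hEtu, hu])
        (by
          intro j'
          simp only [E_mul, E_inv, E_pow, hEt, hu', gu_eq, E_gy]
          by_cases hjj : j = j'
          · subst hjj
            rw [hj]
            simp only [if_true, abs_le, reduceCtorEq, if_false]
            have := hd j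
            omega
          · simp only [hjj, if_false, reduceCtorEq]
            simpa using ho j' (Ne.symm hjj))
      rw [← com_conj u, cj_conj, inv_mul_cancel_right] at this
      exact this
    have e1 := expand (m := m) hd hc0 hcd i j (1 : FreeGroup (Fin r ⊕ Fin l ⊕ Fin k)) (hkl := hkl)
    have e2 := expand (m := m) hd hc0 hcd i' j ((t ^ d j)⁻¹ * g) (hkl := hkl)
    rw [mul_one, cj_one] at e1
    simp only [mul_one] at e1
    rw [← ht] at e1 e2
    rw [← hu'] at e1 e2
    rw [mul_inv_cancel_left] at e2
    set a := ga r l k i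
    set b := cj i' g
    set xs : List (FreeGroup (Fin r ⊕ Fin l ⊕ Fin k)) :=
      (mid (d j) (c j)).map (fun z => sg (cj i (t ^ z.1)) z.2) ++ [cj i (t ^ d j)] with hxs
    set ys : List (FreeGroup (Fin r ⊕ Fin l ⊕ Fin k)) :=
      cj i' ((t ^ d j)⁻¹ * g) ::
        (mid (d j) (c j)).map (fun z => sg (cj i' (t ^ z.1 * ((t ^ d j)⁻¹ * g))) z.2) with hys
    have e1' : Ap R 1 (cj i u) (a * xs.prod) := by
      simpa [hxs, mul_assoc] using e1
    have e2' : Ap R 1 (cj i' (u * ((t ^ d j)⁻¹ * g))) (ys.prod * b) := by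
      simpa [hys, mul_assoc] using e2
    have hxl : xs.length ≤ LL d c := by simp [hxs]; omega
    have hyl : ys.length ≤ LL d c := by simp [hys]; omega
    have hxmem : ∀ x ∈ xs, ∃ s b, 1 ≤ s ∧ s ≤ d j ∧ x = sg (cj i (t ^ s)) b := by
      intro x hx
      simp only [hxs, List.mem_append, List.mem_map, List.mem_singleton] at hx
      rcases hx with ⟨z, hz, rfl⟩ | rfl
      · have := mid_mem hz
        exact ⟨z.1, z.2, by omega, by omega, rfl⟩
      · exact ⟨d j, true, hd j, le_rfl, rfl⟩
    have hymem : ∀ y ∈ ys, ∃ s b, s < d j ∧ y = sg (cj i' (t ^ s * ((t ^ d j)⁻¹ * g))) b := by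
      intro y hy
      simp only [hys, List.mem_cons, List.mem_map] at hy
      rcases hy with rfl | ⟨z, hz, rfl⟩
      · exact ⟨0, true, hd j, by simp [sg]⟩
      · have := mid_mem hz
        exact ⟨z.1, z.2, by omega, rfl⟩
    have cxy : Com R (xs.length * (ys.length * N)) xs.prod ys.prod := by
      apply com_list2
      intro x hx y hy
      obtain ⟨s, b, h1, h2, rfl⟩ := hxmem x hx
      obtain ⟨s', b', h1', rfl⟩ := hymem y hy
      exact com_sg (key s s' h2 (by omega) (by omega)) _ _
    have cxb : Com R (xs.length * N) xs.prod b := by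
      apply com_symm
      apply com_list
      intro x hx
      obtain ⟨s, b', h1, h2, rfl⟩ := hxmem x hx
      have := key s (d j) h2 le_rfl (by omega)
      rw [mul_inv_cancel_left] at this
      exact com_symm (com_sg this b' true)
    have cay : Com R (ys.length * N) a ys.prod := by
      apply com_list
      intro y hy
      obtain ⟨s', b', h1', rfl⟩ := hymem y hy
      have := key 0 s' (by omega) (by omega) (by omega)
      rw [pow_zero, cj_one] at this
      exact com_sg this true b'
    have hmain := com_ap h0 (ap_symm e1') (ap_symm e2')
    have f1 : Ap R (xs.length * (ys.length * N) + xs.length * N) (a * xs.prod * (ys.prod * b)) (a * (ys.prod * b * xs.prod)) := by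
      rw [mul_assoc]
      exact ap_mull a (com_mulr cxy cxb)
    have f2 : Ap R (ys.length * N) (a * (ys.prod * b * xs.prod)) (ys.prod * a * (b * xs.prod)) := by
      have := ap_mulr (b * xs.prod) cay
      simpa [mul_assoc] using this
    have f3 := ap_trans (ap_symm hmain) (ap_trans f1 f2)
    have f4 := ap_mull ys.prod⁻¹ (ap_mulr xs.prod⁻¹ f3)
    have f5 : Ap R (N + 2 * 1 + 2 * 1 + (xs.length * (ys.length * N) + xs.length * N + ys.length * N)) (b * a) (a * b) := by
      simpa [mul_assoc] using f4
    refine com_mono (com_symm f5) ?_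
    unfold K2
    have g1 : xs.length * (ys.length * N) ≤ LL d c * LL d c * N := by
      rw [← mul_assoc]
      exact Nat.mul_le_mul_right _ (Nat.mul_le_mul hxl hyl)
    have hL1 : 1 ≤ LL d c := by omega
    have g2 : xs.length * N ≤ LL d c * LL d c * N :=
      Nat.mul_le_mul_right _ (hxl.trans (Nat.le_mul_of_pos_left _ hL1))
    have g3 : ys.length * N ≤ LL d c * LL d c * N :=
      Nat.mul_le_mul_right _ (hyl.trans (Nat.le_mul_of_pos_left _ hL1))
    have g4 : (5 + 3 * (LL d c * LL d c)) * N = 5 * N + 3 * (LL d c * LL d c * N) := by ring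
    rw [g4]
    omega
  intro i i' g hq hu hb
  have ho : ∀ j' : Fin k, j' ≠ j → |E (Sum.inl (Fin.castLE hkl j')) g| ≤ D j' := by
    intro j' hj'
    have := hb j'
    rwa [Function.update_of_ne hj'] at this
  have hj := hb j
  rw [Function.update_self] at hj
  have hj' := abs_le.1 hj
  push_cast at hj'
  by_cases h1 : E (Sum.inl (Fin.castLE hkl j)) g = D j + 1
  · exact pos i i' g hq hu ho h1
  by_cases h2 : E (Sum.inl (Fin.castLE hkl j)) g = -(D j + 1)
  · have := pos i' i g⁻¹ (ql_inv hq) (by simp [hu]) (by simpa using ho) (by rw [E_inv, h2]; ring)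
    rw [← com_conj g, cj_conj, inv_mul_cancel, cj_one] at this
    exact com_symm this
  · refine com_mono (h i i' g (ql_mono hq (by omega)) hu ?_) ?_
    · intro j''
      by_cases hjj : j'' = j
      · subst hjj
        rw [abs_le]; omega
      · exact ho j'' hjj
    · unfold K2
      nlinarith [Nat.zero_le (LL d c * LL d c * N)]

theorem Bs_pos (X : ℕ) : 1 ≤ Bs m d X := by unfold Bs; omega

theorem cb_all (hm : ∀ i : Fin l, k ≤ (i : ℕ) → 1 ≤ m i) (hd : ∀ i, 1 ≤ d i)
    (hc0 : ∀ i, c i 0 = 1) (hcd : ∀ i, c i (d i) = 1) (n : ℕ) :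
    ∀ (D : Fin k → ℕ) (X : ℕ), (∀ j, d j ≤ D j) → ∑ j, D j = ∑ j, d j + n →
      CB r hkl m d c D X (K2 d c ^ n * Bs m d (X + n * (3 * dd d + 2))) := by
  induction n with
  | zero =>
    intro D X hD hs
    have : D = d := by
      have := (Finset.sum_eq_sum_iff_of_le (s := Finset.univ) (f := d) (g := D) (fun j _ => hD j)).1 (by omega)
      funext j; exact (this j (Finset.mem_univ j)).symm
    rw [this]
    simpa using cb_base hm X
  | succ n ih =>
    intro D X hD hs
    obtain ⟨j, hj⟩ : ∃ j, d j < D j := by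
      by_contra hcon
      push Not at hcon
      have := Finset.sum_le_sum (s := Finset.univ) (f := D) (g := d) (fun j _ => hcon j)
      omega
    have h1 := ih (Function.update D j (D j - 1)) (X + (3 * dd d + 2)) (by
        intro j'
        by_cases hjj : j' = j
        · subst hjj; rw [Function.update_self]; omega
        · rw [Function.update_of_ne hjj]; exact hD j') (by
        rw [Finset.sum_update_of_mem (Finset.mem_univ j)]
        rw [← Finset.add_sum_erase _ _ (Finset.mem_univ j)] at hs
        rw [Finset.sdiff_singleton_eq_erase]
        omega)
    have hK : 1 ≤ K2 d c := by unfold K2; omega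
    have h2 := cb_step hd hc0 hcd (Nat.mul_pos (Nat.pow_pos hK) (Bs_pos _)) j
      (by rw [Function.update_self]; omega) h1
    rw [Function.update_self, Function.update_idem] at h2
    have e : Function.update D j (D j - 1 + 1) = D := by
      rw [Nat.sub_add_cancel (by omega), Function.update_eq_self]
    rw [e] at h2
    have e2 : X + (3 * dd d + 2) + n * (3 * dd d + 2) = X + (n + 1) * (3 * dd d + 2) := by ring
    rw [e2] at h2
    rw [pow_succ', mul_assoc]
    exact h2

/-- final commutator cost -/
def CC (m : Fin l → ℕ) (d : Fin k → ℕ) (c : Fin k → ℕ → ℤ) (X : ℕ) : ℕ :=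
  K2 d c ^ (k * (2 * X)) * Bs m d (2 * X + k * (2 * X) * (3 * dd d + 2))

theorem com_t (hm : ∀ i : Fin l, k ≤ (i : ℕ) → 1 ≤ m i) (hd : ∀ i, 1 ≤ d i)
    (hc0 : ∀ i, c i 0 = 1) (hcd : ∀ i, c i (d i) = 1) {X : ℕ} (i i' : Fin r)
    {g g' : FreeGroup (Fin r ⊕ Fin l ⊕ Fin k)} (hg : QLen g X) (hg' : QLen g' X)
    (hu : ∀ j, E (Sum.inr j) g = 0) (hu' : ∀ j, E (Sum.inr j) g' = 0) :
    Com (WFRel r l k hkl m d c) (CC m d c X) (cj i g) (cj i' g') := by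
  have h := cb_all (r := r) (hkl := hkl) hm hd hc0 hcd (k * (2 * X)) (fun j => d j + 2 * X) (2 * X)
    (fun j => by omega) (by simp [Finset.sum_add_distrib])
  have hq : QLen (g' * g⁻¹) (2 * X) := ql_mono (ql_mul hg' (ql_inv hg)) (by omega)
  have := h i i' (g' * g⁻¹) hq
    (by simp [hu, hu']) (by
      intro j
      have := E_le hq (Sum.inl (Fin.castLE hkl j))
      push_cast at this ⊢
      omega)
  rw [← com_conj g, cj_conj, inv_mul_cancel_right] at this
  exact this

end Commutators

section Reps

variable {r l k}

/-- product of a signed list of conjugated generators -/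
def lp (L : List ((Fin r × FreeGroup (Fin r ⊕ Fin l ⊕ Fin k)) × Bool)) :
    FreeGroup (Fin r ⊕ Fin l ⊕ Fin k) :=
  (L.map (fun z => sg (cj z.1.1 z.1.2) z.2)).prod

theorem lp_append (L L' : List ((Fin r × FreeGroup (Fin r ⊕ Fin l ⊕ Fin k)) × Bool)) :
    lp (L ++ L') = lp L * lp L' := by simp [lp]

theorem lp_conj (L : List ((Fin r × FreeGroup (Fin r ⊕ Fin l ⊕ Fin k)) × Bool))
    (h : FreeGroup (Fin r ⊕ Fin l ⊕ Fin k)) :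
    h⁻¹ * lp L * h = lp (L.map (fun z => ((z.1.1, z.1.2 * h), z.2))) := by
  induction L with
  | nil => simp [lp]
  | cons a L ih =>
    unfold lp at ih ⊢
    simp only [List.map_cons, List.prod_cons]
    rw [← ih, ← cj_conj, ← sg_conj]
    group

theorem lp_inv (L : List ((Fin r × FreeGroup (Fin r ⊕ Fin l ⊕ Fin k)) × Bool)) :
    (lp L)⁻¹ = lp (L.map (fun z => (z.1, !z.2))).reverse := by
  unfold lp
  rw [List.prod_inv_reverse, List.map_reverse, List.map_map, List.map_map]
  congr 2
  apply List.map_congr_left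
  rintro ⟨y, b⟩ -
  cases b <;> simp [sg]

theorem E_lp (y : Fin l ⊕ Fin k) (L : List ((Fin r × FreeGroup (Fin r ⊕ Fin l ⊕ Fin k)) × Bool)) :
    E y (lp L) = 0 := by
  unfold lp
  rw [E_list]
  simp [E_sg]

/-- representability by pure `t` conjugates -/
def Rep (R : Set (FreeGroup (Fin r ⊕ Fin l ⊕ Fin k))) (w : FreeGroup (Fin r ⊕ Fin l ⊕ Fin k))
    (X N A : ℕ) : Prop :=
  ∃ L : List ((Fin r × FreeGroup (Fin r ⊕ Fin l ⊕ Fin k)) × Bool), L.length ≤ N ∧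
    (∀ z ∈ L, QLen z.1.2 X ∧ ∀ j, E (Sum.inr j) z.1.2 = 0) ∧ Ap R A w (lp L)

variable {R : Set (FreeGroup (Fin r ⊕ Fin l ⊕ Fin k))}

theorem rep_mono {w : FreeGroup (Fin r ⊕ Fin l ⊕ Fin k)} {X N A X' N' A' : ℕ}
    (h : Rep R w X N A) (hX : X ≤ X') (hN : N ≤ N') (hA : A ≤ A') : Rep R w X' N' A' := by
  obtain ⟨L, h1, h2, h3⟩ := h
  exact ⟨L, h1.trans hN, fun z hz => ⟨ql_mono (h2 z hz).1 hX, (h2 z hz).2⟩, ap_mono h3 hA⟩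

theorem rep_one (X N A : ℕ) : Rep R 1 X N A := ⟨[], by simp, by simp, by simpa [lp] using ap_refl _ _⟩

theorem rep_mul {w w' : FreeGroup (Fin r ⊕ Fin l ⊕ Fin k)} {X N A N' A' : ℕ}
    (h : Rep R w X N A) (h' : Rep R w' X N' A') : Rep R (w * w') X (N + N') (A + A') := by
  obtain ⟨L, h1, h2, h3⟩ := h
  obtain ⟨L', h1', h2', h3'⟩ := h'
  refine ⟨L ++ L', by simp; omega, ?_, by rw [lp_append]; exact ap_mul h3 h3'⟩
  intro z hz
  rcases List.mem_append.1 hz with hz | hz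
  · exact h2 z hz
  · exact h2' z hz

theorem rep_inv {w : FreeGroup (Fin r ⊕ Fin l ⊕ Fin k)} {X N A : ℕ}
    (h : Rep R w X N A) : Rep R w⁻¹ X N A := by
  obtain ⟨L, h1, h2, h3⟩ := h
  refine ⟨(L.map (fun z => (z.1, !z.2))).reverse, by simpa using h1, ?_, ?_⟩
  · intro z hz
    simp only [List.mem_reverse, List.mem_map] at hz
    obtain ⟨z', hz', rfl⟩ := hz
    exact h2 z' hz'
  · rw [← lp_inv]; exact ap_inv h3

theorem rep_sg {w : FreeGroup (Fin r ⊕ Fin l ⊕ Fin k)} {X N A : ℕ}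
    (h : Rep R w X N A) (b : Bool) : Rep R (sg w b) X N A := by
  cases b
  · exact rep_inv h
  · exact h

theorem rep_list {ι : Type*} (L : List ι) (f : ι → FreeGroup (Fin r ⊕ Fin l ⊕ Fin k)) (X N A : ℕ)
    (h : ∀ x ∈ L, Rep R (f x) X N A) : Rep R (L.map f).prod X (L.length * N) (L.length * A) := by
  induction L with
  | nil => simpa using rep_one _ _ _
  | cons a L ih =>
    simp only [List.map_cons, List.prod_cons, List.length_cons]
    refine rep_mono (rep_mul (h a (by simp)) (ih (fun x hx => h x (by simp [hx])))) le_rfl ?_ ?_ <;>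
    · rw [Nat.succ_mul]; omega

theorem rep_ap {w w' : FreeGroup (Fin r ⊕ Fin l ⊕ Fin k)} {X N A B : ℕ}
    (h : Rep R w X N A) (h' : Ap R B w' w) : Rep R w' X N (B + A) := by
  obtain ⟨L, h1, h2, h3⟩ := h
  exact ⟨L, h1, h2, ap_trans h' h3⟩

variable {hkl : k ≤ l} {m : Fin l → ℕ} {d : Fin k → ℕ} {c : Fin k → ℕ → ℤ}

theorem rep_cj (hd : ∀ i, 1 ≤ d i) (hc0 : ∀ i, c i 0 = 1) (hcd : ∀ i, c i (d i) = 1)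
    (i : Fin r) (M : ℕ) : ∀ (g : FreeGroup (Fin r ⊕ Fin l ⊕ Fin k)) (X : ℕ), QLen g X →
    (∀ j, 0 ≤ E (Sum.inr j) g) → ∑ j, E (Sum.inr j) g = M →
    Rep (WFRel r l k hkl m d c) (cj i g) (X + (1 + dd d) * M) (LL d c ^ M) ((LL d c + 1) ^ M) := by
  induction M with
  | zero =>
    intro g X hq hE hs
    have h0 := (Finset.sum_eq_zero_iff_of_nonneg (fun j _ => hE j)).1 (by simpa using hs)
    refine ⟨[((i, g), true)], by simp, ?_, by simpa [lp, sg] using ap_refl _ _⟩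
    intro z hz
    simp only [List.mem_singleton] at hz
    subst hz
    exact ⟨ql_mono hq (by omega), fun j => h0 j (Finset.mem_univ j)⟩
  | succ M ih =>
    intro g X hq hE hs
    obtain ⟨j, hj⟩ : ∃ j, 0 < E (Sum.inr j) g := by
      by_contra hcon
      push Not at hcon
      have := Finset.sum_nonpos (s := Finset.univ) (fun j _ => hcon j)
      rw [hs] at this
      push_cast at this
      omega
    set u := gu r l k j with hu
    set g' := u⁻¹ * g with hg'
    have hEu : ∀ j', E (Sum.inr j') u = if j = j' then 1 else 0 := by
      intro j'; simp [hu, gu_eq]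
    have hdj := le_dd (d := d) j
    have key : ∀ s, s ≤ d j → Rep (WFRel r l k hkl m d c) (cj i (tj r hkl j ^ s * g'))
        (X + (1 + dd d) * (M + 1)) (LL d c ^ M) ((LL d c + 1) ^ M) := by
      intro s hsd
      have hEg : ∀ j', E (Sum.inr j') (tj r hkl j ^ s * g') =
          E (Sum.inr j') g - if j = j' then 1 else 0 := by
        intro j'
        simp only [hg', E_mul, E_pow, E_inv, hEu]
        simp [tj]
        ring
      refine rep_mono (ih (tj r hkl j ^ s * g') (s * 1 + (1 + X))
        (ql_mul (ql_pow (ql_gy _) s) (ql_mul (ql_inv (ql_gy _)) hq)) ?_ ?_) ?_ le_rfl le_rfl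
      · intro j'
        rw [hEg]
        have := hE j'
        split_ifs with hjj
        · subst hjj; omega
        · omega
      · simp only [hEg]
        rw [Finset.sum_sub_distrib, hs]
        simp
      · have e : (1 + dd d) * (M + 1) = (1 + dd d) * M + (1 + dd d) := by ring
        rw [e]; omega
    have h0 := key 0 (by omega)
    rw [pow_zero, one_mul] at h0
    have h1 := rep_list (mid (d j) (c j)) (fun z => sg (cj i (tj r hkl j ^ z.1 * g')) z.2) _ _ _
      (fun z hz => rep_sg (key z.1 (by have := mid_mem hz; omega)) z.2)
    have h2 := rep_mul (rep_mul h0 h1) (key (d j) le_rfl)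
    have h3 := rep_ap h2 (expand hd hc0 hcd i j g')
    rw [hg', hu, mul_inv_cancel_left] at h3
    have hL := le_LL (d := d) (c := c) j
    refine rep_mono h3 le_rfl ?_ ?_
    · rw [pow_succ']
      have := Nat.mul_le_mul_right (LL d c ^ M) hL
      rw [add_mul] at this
      omega
    · rw [pow_succ', add_mul (LL d c)]
      have := Nat.mul_le_mul_right ((LL d c + 1) ^ M) hL
      rw [add_mul] at this
      have h4 : 1 ≤ (LL d c + 1) ^ M := Nat.one_le_pow _ _ (by omega)
      omega

theorem decomp (W : List ((Fin r ⊕ Fin l ⊕ Fin k) × Bool)) :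
    ∃ (L : List ((Fin r × FreeGroup (Fin r ⊕ Fin l ⊕ Fin k)) × Bool))
      (p : FreeGroup (Fin r ⊕ Fin l ⊕ Fin k)), L.length ≤ W.length ∧
      (∀ z ∈ L, QLen z.1.2 W.length) ∧ QLen p W.length ∧ FreeGroup.mk W = lp L * p := by
  induction W with
  | nil => exact ⟨[], 1, by simp, by simp, ql_one _, by simp [lp, FreeGroup.one_eq_mk]⟩
  | cons a W ih =>
    obtain ⟨L, p, h1, h2, h3, h4⟩ := ih
    have e : FreeGroup.mk (a :: W) = sg (FreeGroup.of a.1) a.2 * FreeGroup.mk W := by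
      rcases a with ⟨x, b⟩
      cases b <;> simp [sg, FreeGroup.of, FreeGroup.inv_mk, FreeGroup.invRev]
    rcases a with ⟨i | y, b⟩
    · refine ⟨((i, 1), b) :: L, p, by simp [h1], ?_, ql_mono h3 (by simp), ?_⟩
      · intro z hz
        rcases List.mem_cons.1 hz with rfl | hz
        · exact ql_one _
        · exact ql_mono (h2 z hz) (by simp)
      · rw [e, h4]
        simp only [lp, List.map_cons, List.prod_cons, cj_one]
        rw [mul_assoc]; rfl
    · set y' := sg (gy r y) b with hy
      have hyq : QLen y' 1 := by
        cases b
        · exact ql_inv (ql_gy _)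
        · exact ql_gy _
      refine ⟨L.map (fun z => ((z.1.1, z.1.2 * y'⁻¹), z.2)), y' * p, by simp; omega, ?_, ?_, ?_⟩
      · intro z hz
        simp only [List.mem_map] at hz
        obtain ⟨z', hz', rfl⟩ := hz
        simpa using ql_mul (h2 z' hz') (ql_inv hyq)
      · rw [List.length_cons, add_comm]; exact ql_mul hyq h3
      · rw [e, h4, ← lp_conj]
        change y' * _ = _
        group

/-- length and size parameters -/
def XX (d : Fin k → ℕ) (n : ℕ) : ℕ := n + k * n + (1 + dd d) * (k * (2 * n))
/-- number of terms -/
def NN (d : Fin k → ℕ) (c : Fin k → ℕ → ℤ) (n : ℕ) : ℕ := n * LL d c ^ (k * (2 * n))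
/-- area -/
def AA (d : Fin k → ℕ) (c : Fin k → ℕ → ℤ) (n : ℕ) : ℕ := n * (LL d c + 1) ^ (k * (2 * n))

/-- the conjugator -/
def UU (r l k n : ℕ) : FreeGroup (Fin r ⊕ Fin l ⊕ Fin k) :=
  ((List.finRange k).map (fun s => gy r (Sum.inr s : Fin l ⊕ Fin k) ^ n)).prod

theorem ql_UU (n : ℕ) : QLen (UU r l k n) (k * n) := by
  have := ql_list (r := r) (List.finRange k) (fun s => gy r (Sum.inr s : Fin l ⊕ Fin k) ^ n) n
    (fun s _ => by simpa using ql_pow (r := r) (ql_gy (Sum.inr s : Fin l ⊕ Fin k)) n)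
  unfold UU
  simpa using this

theorem E_UU (n : ℕ) (j : Fin k) : E (Sum.inr j) (UU r l k n) = n := by
  unfold UU
  rw [E_list, ← List.ofFn_eq_map, List.sum_ofFn]
  simp

theorem structure_word (hd : ∀ i, 1 ≤ d i) (hc0 : ∀ i, c i 0 = 1) (hcd : ∀ i, c i (d i) = 1)
    (n : ℕ) (w : FreeGroup (Fin r ⊕ Fin l ⊕ Fin k)) (hw : freeNorm w ≤ n) :
    ∃ v p, w = v * p ∧ QLen p n ∧ (∀ y, E y w = E y p) ∧
      Rep (WFRel r l k hkl m d c) ((UU r l k n)⁻¹ * v * UU r l k n) (XX d n) (NN d c n) (AA d c n) := by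
  have hmk : FreeGroup.mk (@FreeGroup.toWord _ (Classical.decEq _) w) = w := by
    let _ := Classical.decEq (Fin r ⊕ Fin l ⊕ Fin k)
    exact FreeGroup.mk_toWord
  unfold freeNorm at hw
  set W := @FreeGroup.toWord _ (Classical.decEq _) w
  obtain ⟨L, p, h1, h2, h3, h4⟩ := decomp W
  rw [hmk] at h4
  refine ⟨lp L, p, h4, ql_mono h3 hw, ?_, ?_⟩
  · intro y
    rw [h4, E_mul, E_lp, zero_add]
  · rw [lp_conj]
    unfold lp
    rw [List.map_map]
    have hL1 : 1 ≤ LL d c := by unfold LL; omega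
    have := rep_list (R := WFRel r l k hkl m d c) L ((fun z => sg (cj z.1.1 z.1.2) z.2) ∘
      (fun z => ((z.1.1, z.1.2 * UU r l k n), z.2))) (XX d n) (LL d c ^ (k * (2 * n)))
      ((LL d c + 1) ^ (k * (2 * n))) (by
      intro z hz
      simp only [Function.comp]
      apply rep_sg
      have hq : QLen z.1.2 n := ql_mono (h2 z hz) hw
      have hE : ∀ j, 0 ≤ E (Sum.inr j) (z.1.2 * UU r l k n) ∧
          E (Sum.inr j) (z.1.2 * UU r l k n) ≤ 2 * n := by
        intro j
        have := abs_le.1 (E_le hq (Sum.inr j))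
        rw [E_mul, E_UU]
        constructor <;> omega
      obtain ⟨M, hM⟩ := Int.eq_ofNat_of_zero_le (Finset.sum_nonneg (s := Finset.univ) (fun j _ => (hE j).1))
      have hMle : M ≤ k * (2 * n) := by
        have := Finset.sum_le_sum (s := Finset.univ) (fun j _ => (hE j).2)
        rw [hM] at this
        simp only [Finset.sum_const, Finset.card_univ, Fintype.card_fin, nsmul_eq_mul] at this
        exact_mod_cast this
      refine rep_mono (rep_cj hd hc0 hcd z.1.1 M (z.1.2 * UU r l k n) (n + k * n)
        (ql_mul hq (ql_UU n)) (fun j => (hE j).1) hM) ?_ ?_ ?_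
      · exact Nat.add_le_add_left (Nat.mul_le_mul_left _ hMle) _
      · exact Nat.pow_le_pow_right hL1 hMle
      · exact Nat.pow_le_pow_right (by omega) hMle)
    refine rep_mono this le_rfl ?_ ?_
    · exact Nat.mul_le_mul_right _ (h1.trans hw)
    · exact Nat.mul_le_mul_right _ (h1.trans hw)

/-- words with trivial image in the abelian quotient commute -/
theorem com_words (hm : ∀ i : Fin l, k ≤ (i : ℕ) → 1 ≤ m i) (hd : ∀ i, 1 ≤ d i)
    (hc0 : ∀ i, c i 0 = 1) (hcd : ∀ i, c i (d i) = 1)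
    (w w' : FreeGroup (Fin r ⊕ Fin l ⊕ Fin k)) (hw : ∀ y, E y w = 0) (hw' : ∀ y, E y w' = 0) :
    ∃ N, Com (WFRel r l k hkl m d c) N w w' := by
  set n := max (freeNorm w) (freeNorm w')
  obtain ⟨v, p, h1, h2, h3, L, h4, h5, h6⟩ := structure_word (hkl := hkl) (m := m) hd hc0 hcd n w (le_max_left _ _)
  obtain ⟨v', p', h1', h2', h3', L', h4', h5', h6'⟩ := structure_word (hkl := hkl) (m := m) hd hc0 hcd n w' (le_max_right _ _)
  have hp : AreaLe (WFRel r l k hkl m d c) p (KQ l k * (n * n)) := q_triv h2 (fun y => by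
    rw [← h3, hw]; exact dvd_zero _)
  have hp' : AreaLe (WFRel r l k hkl m d c) p' (KQ l k * (n * n)) := q_triv h2' (fun y => by
    rw [← h3', hw']; exact dvd_zero _)
  have hL := com_list2 (R := WFRel r l k hkl m d c) (L.map (fun z => sg (cj z.1.1 z.1.2) z.2))
    (L'.map (fun z => sg (cj z.1.1 z.1.2) z.2)) (N := CC m d c (XX d n)) (by
    intro x hx y hy
    simp only [List.mem_map] at hx hy
    obtain ⟨z, hz, rfl⟩ := hx
    obtain ⟨z', hz', rfl⟩ := hy
    exact com_sg (com_t hm hd hc0 hcd _ _ (h5 z hz).1 (h5' z' hz').1 (h5 z hz).2 (h5' z' hz').2) _ _)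
  have h7 := com_ap hL h6 h6'
  rw [com_conj] at h7
  have a1 := ap_mull v (ap_one.2 hp)
  have a2 := ap_mull v' (ap_one.2 hp')
  rw [mul_one, ← h1] at a1
  rw [mul_one, ← h1'] at a2
  exact ⟨_, com_ap h7 a1 a2⟩

theorem metab (hm : ∀ i : Fin l, k ≤ (i : ℕ) → 1 ≤ m i) (hd : ∀ i, 1 ≤ d i)
    (hc0 : ∀ i, c i 0 = 1) (hcd : ∀ i, c i (d i) = 1) :
    IsMetabelian (FreeGroup (Fin r ⊕ Fin l ⊕ Fin k) ⧸
      Subgroup.normalClosure (WFRel r l k hkl m d c)) := by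
  intro a b ha hb
  set N := Subgroup.normalClosure (WFRel r l k hkl m d c)
  have hmap : commutator (FreeGroup (Fin r ⊕ Fin l ⊕ Fin k) ⧸ N) =
      (commutator (FreeGroup (Fin r ⊕ Fin l ⊕ Fin k))).map (QuotientGroup.mk' N) := by
    rw [commutator_def, commutator_def, Subgroup.map_commutator]
    rw [← MonoidHom.range_eq_map, MonoidHom.range_eq_top.2 (QuotientGroup.mk'_surjective N)]
  rw [hmap] at ha hb
  obtain ⟨w, hw, rfl⟩ := ha
  obtain ⟨w', hw', rfl⟩ := hb
  have hE : ∀ w ∈ commutator (FreeGroup (Fin r ⊕ Fin l ⊕ Fin k)), ∀ y, E y w = 0 := by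
    intro w hw y
    have : commutator (FreeGroup (Fin r ⊕ Fin l ⊕ Fin k)) ≤ (FreeGroup.lift (fun x => Multiplicative.ofAdd
      (if x = Sum.inr y then (1 : ℤ) else 0))).ker := Abelianization.commutator_subset_ker _
    have := this hw
    rw [MonoidHom.mem_ker] at this
    simp [E, this]
  obtain ⟨M, hM⟩ := com_words (hkl := hkl) hm hd hc0 hcd w w' (hE w hw) (hE w' hw')
  have := al_mem hM
  rw [← map_mul, ← map_mul]
  have h2 := (QuotientGroup.eq_one_iff (N := N) _).2 this
  rw [← QuotientGroup.mk'_apply, map_mul, map_inv, mul_inv_eq_one] at h2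
  exact h2

end Reps

section Model

variable {r l k}

/-- the grading group -/
abbrev TT (k : ℕ) {l : ℕ} (m : Fin l → ℕ) : Type :=
  (Fin k → ℤ) × ((s : {s : Fin l // k ≤ (s : ℕ)}) → ZMod (m s.1))

/-- the group ring -/
abbrev SZ (k : ℕ) {l : ℕ} (m : Fin l → ℕ) : Type := AddMonoidAlgebra ℤ (TT k m)

/-- its total ring of fractions -/
abbrev SF (k : ℕ) {l : ℕ} (m : Fin l → ℕ) : Type := FractionRing (SZ k m)

/-- exponents modulo orders -/
def key (hkl : k ≤ l) (m : Fin l → ℕ) (g : FreeGroup (Fin r ⊕ Fin l ⊕ Fin k)) : TT k m :=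
  (fun j => E (Sum.inl (Fin.castLE hkl j)) g, fun s => (E (Sum.inl s.1) g : ZMod (m s.1)))

variable {hkl : k ≤ l} {m : Fin l → ℕ} {d : Fin k → ℕ} {c : Fin k → ℕ → ℤ}

theorem key_mul (g h : FreeGroup (Fin r ⊕ Fin l ⊕ Fin k)) :
    key hkl m (g * h) = key hkl m g + key hkl m h := by
  ext <;> simp [key]

theorem key_one : key hkl m (1 : FreeGroup (Fin r ⊕ Fin l ⊕ Fin k)) = 0 := by
  ext <;> simp [key]

theorem key_pow (g : FreeGroup (Fin r ⊕ Fin l ⊕ Fin k)) (n : ℕ) :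
    key hkl m (g ^ n) = n • key hkl m g := by
  induction n with
  | zero => simp [key_one]
  | succ n ih => rw [pow_succ, key_mul, ih, succ_nsmul]

theorem key_dvd {g h : FreeGroup (Fin r ⊕ Fin l ⊕ Fin k)} (hk : key hkl m g = key hkl m h)
    (hu : ∀ j, E (Sum.inr j) g = 0) (hu' : ∀ j, E (Sum.inr j) h = 0) (y : Fin l ⊕ Fin k) :
    (mu m y : ℤ) ∣ E y g - E y h := by
  rcases y with s | s
  · by_cases hs : (s : ℕ) < k
    · have := congrFun (congrArg Prod.fst hk) ⟨s, hs⟩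
      simp only [key] at this
      have e : Fin.castLE hkl ⟨s, hs⟩ = s := rfl
      rw [e] at this
      rw [this, sub_self]; exact dvd_zero _
    · have := congrFun (congrArg Prod.snd hk) ⟨s, by omega⟩
      simp only [key] at this
      rw [eq_comm, ZMod.intCast_eq_intCast_iff_dvd_sub] at this
      simpa [mu, hs] using this
  · rw [hu, hu', sub_self]; exact dvd_zero _

/-- unit vector -/
def ev (m : Fin l → ℕ) (j : Fin k) : TT k m := (Pi.single j 1, 0)

theorem key_tj (j : Fin k) : key hkl m (tj r hkl j) = ev m j := by
  ext x
  · simp [key, tj, ev, Pi.single_apply, Fin.ext_iff, eq_comm]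
  · rcases x with ⟨x, hx⟩
    have : ¬ (Fin.castLE hkl j = x) := by
      intro h; rw [← h] at hx; simp at hx; omega
    simp [key, tj, ev, this]

open AddMonoidAlgebra in
/-- the polynomial -/
noncomputable def fS (m : Fin l → ℕ) (d : Fin k → ℕ) (c : Fin k → ℕ → ℤ) (j : Fin k) : SZ k m :=
  ∑ s ∈ Finset.range (d j + 1), single (s • ev m j) (c j s)

theorem fS_nzd (hcd : ∀ i, c i (d i) = 1) (j : Fin k) :
    fS m d c j ∈ nonZeroDivisors (SZ k m) := by
  rw [mem_nonZeroDivisors_iff_left]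
  intro x hx
  by_contra hne
  have hs : x.coeff.support.Nonempty := by
    rw [Finsupp.support_nonempty_iff]
    simpa using hne
  obtain ⟨a, ha, hmax⟩ := Finset.exists_max_image x.coeff.support (fun a : TT k m => a.1 j) hs
  have h1 : (fS m d c j * x).coeff (d j • ev m j + a) = 0 := by rw [hx]; simp
  unfold fS at h1
  rw [Finset.sum_mul, AddMonoidAlgebra.coeff_sum, Finset.sum_apply'] at h1
  simp only [AddMonoidAlgebra.coeff_single_mul_apply] at h1
  rw [Finset.sum_range_succ, Finset.sum_eq_zero] at h1
  · rw [hcd, zero_add, one_mul, neg_add_cancel_left] at h1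
    exact (Finsupp.mem_support_iff.1 ha) h1
  · intro s hs
    rw [Finset.mem_range] at hs
    by_contra hn
    have h2 := hmax _ (Finsupp.mem_support_iff.2 (right_ne_zero_of_mul hn))
    simp [ev] at h2
    omega

/-- the polynomial as a unit -/
noncomputable def fU (m : Fin l → ℕ) (d : Fin k → ℕ) (c : Fin k → ℕ → ℤ)
    (hcd : ∀ i, c i (d i) = 1) (j : Fin k) : (SF k m)ˣ :=
  (IsLocalization.map_units (SF k m) (⟨fS m d c j, fS_nzd hcd j⟩ : nonZeroDivisors (SZ k m))).unit

/-- monomials as units -/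
noncomputable def sT (k : ℕ) {l : ℕ} (m : Fin l → ℕ) : Multiplicative (TT k m) →* (SF k m)ˣ :=
  MonoidHom.toHomUnits (((algebraMap (SZ k m) (SF k m)) : SZ k m →* SF k m).comp
    (AddMonoidAlgebra.of ℤ (TT k m)))

theorem sT_val (x : TT k m) : ((sT k m (Multiplicative.ofAdd x) : (SF k m)ˣ) : SF k m) =
    algebraMap (SZ k m) (SF k m) (AddMonoidAlgebra.single x 1) := rfl

/-- the multiplier character -/
noncomputable def chi (r : ℕ) {l k : ℕ} (hkl : k ≤ l) (m : Fin l → ℕ) (d : Fin k → ℕ)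
    (c : Fin k → ℕ → ℤ) (hcd : ∀ i, c i (d i) = 1) :
    FreeGroup (Fin r ⊕ Fin l ⊕ Fin k) →* (SF k m)ˣ :=
  MonoidHom.mk' (fun g => sT k m (Multiplicative.ofAdd (key hkl m g)) *
    ∏ j, fU m d c hcd j ^ E (Sum.inr j) g) (by
      intro a b
      simp only [key_mul, ofAdd_add, map_mul, E_mul, zpow_add, Finset.prod_mul_distrib]
      exact mul_mul_mul_comm _ _ _ _)

theorem chi_apply (hcd : ∀ i, c i (d i) = 1) (g : FreeGroup (Fin r ⊕ Fin l ⊕ Fin k)) :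
    chi r hkl m d c hcd g = sT k m (Multiplicative.ofAdd (key hkl m g)) *
    ∏ j, fU m d c hcd j ^ E (Sum.inr j) g := rfl

theorem chi_t (hcd : ∀ i, c i (d i) = 1) {g : FreeGroup (Fin r ⊕ Fin l ⊕ Fin k)}
    (hu : ∀ j, E (Sum.inr j) g = 0) : ((chi r hkl m d c hcd g : (SF k m)ˣ) : SF k m) =
    algebraMap (SZ k m) (SF k m) (AddMonoidAlgebra.single (key hkl m g) 1) := by
  rw [chi_apply, ← sT_val]
  simp [hu]

theorem chi_u (hcd : ∀ i, c i (d i) = 1) (j : Fin k) :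
    ((chi r hkl m d c hcd (gu r l k j) : (SF k m)ˣ) : SF k m) =
    algebraMap (SZ k m) (SF k m) (fS m d c j) := by
  rw [chi_apply]
  have h1 : key hkl m (gu r l k j) = 0 := by ext <;> simp [key, gu_eq]
  have h2 : ∏ j', fU m d c hcd j' ^ E (Sum.inr j') (gu r l k j) = fU m d c hcd j := by
    rw [Finset.prod_eq_single j]
    · simp [gu_eq]
    · intro j' _ hj
      simp [gu_eq, Ne.symm hj]
    · simp
  rw [h1, h2, ofAdd_zero, map_one, one_mul]
  rfl

theorem chi_ga (hcd : ∀ i, c i (d i) = 1) (i : Fin r) :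
    chi r hkl m d c hcd (ga r l k i) = 1 := by
  rw [chi_apply]
  have h1 : key hkl m (ga r l k i) = 0 := by ext <;> simp [key]
  rw [h1]
  simp

/-- translations -/
def Tr (S : Type*) [CommRing S] : Multiplicative S →* Equiv.Perm S :=
  MonoidHom.mk' (fun x => Equiv.addRight (Multiplicative.toAdd x)) (by
    intro a b; ext x; simp [Equiv.addRight]; ring)

theorem Tr_apply {S : Type*} [CommRing S] (x y : S) : Tr S (Multiplicative.ofAdd x) y = y + x := rfl

/-- the affine action -/
noncomputable def phi (r : ℕ) {l k : ℕ} (hkl : k ≤ l) (m : Fin l → ℕ) (d : Fin k → ℕ)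
    (c : Fin k → ℕ → ℤ) (hcd : ∀ i, c i (d i) = 1) (i0 : Fin r) :
    FreeGroup (Fin r ⊕ Fin l ⊕ Fin k) →* Equiv.Perm (SF k m) :=
  FreeGroup.lift (Sum.elim
    (fun i => Tr (SF k m) (Multiplicative.ofAdd (if i = i0 then 1 else 0)))
    (fun y => MulAction.toPermHom (SF k m)ˣ (SF k m) (chi r hkl m d c hcd (gy r y))⁻¹))

theorem phi_ga (hcd : ∀ i, c i (d i) = 1) (i0 i : Fin r) :
    phi r hkl m d c hcd i0 (ga r l k i) =
      Tr (SF k m) (Multiplicative.ofAdd (if i = i0 then 1 else 0)) := by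
  simp [phi, ga]

theorem phi_gy (hcd : ∀ i, c i (d i) = 1) (i0 : Fin r) (y : Fin l ⊕ Fin k) :
    phi r hkl m d c hcd i0 (gy r y) =
      MulAction.toPermHom (SF k m)ˣ (SF k m) (chi r hkl m d c hcd (gy r y))⁻¹ := by
  simp [phi, gy]

theorem phi_sub (hcd : ∀ i, c i (d i) = 1) (i0 : Fin r) (g : FreeGroup (Fin r ⊕ Fin l ⊕ Fin k)) :
    ∀ x y : SF k m, phi r hkl m d c hcd i0 g (x + y) =
      phi r hkl m d c hcd i0 g x + ((chi r hkl m d c hcd g)⁻¹ : (SF k m)ˣ) * y := by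
  have hgen : ∀ z : Fin r ⊕ Fin l ⊕ Fin k, ∀ x y : SF k m, phi r hkl m d c hcd i0 (FreeGroup.of z) (x + y) =
      phi r hkl m d c hcd i0 (FreeGroup.of z) x + ((chi r hkl m d c hcd (FreeGroup.of z))⁻¹ : (SF k m)ˣ) * y := by
    rintro (i | y') x y
    · have h1 := phi_ga (hkl := hkl) (m := m) hcd i0 i
      have h2 := chi_ga (hkl := hkl) (m := m) hcd i
      unfold ga at h1 h2
      rw [h1, h2, Tr_apply, Tr_apply]
      simp only [inv_one, Units.val_one, one_mul]
      ring
    · have h1 := phi_gy (hkl := hkl) (m := m) hcd i0 y'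
      unfold gy at h1
      rw [h1]
      simp only [MulAction.toPermHom_apply, MulAction.toPerm_apply, Units.smul_def, smul_eq_mul]
      ring
  induction g using FreeGroup.induction_on with
  | C1 => intro x y; simp
  | of z => exact hgen z
  | inv_of z _ =>
    intro x y
    rw [map_inv, map_inv, Equiv.Perm.inv_eq_iff_eq, hgen, inv_inv, ← Equiv.Perm.mul_apply,
      mul_inv_cancel, Equiv.Perm.one_apply, Units.inv_mul_cancel_left]
  | mul g h ihg ihh =>
    intro x y
    rw [map_mul, map_mul, Equiv.Perm.mul_apply, Equiv.Perm.mul_apply, ihh, ihg]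
    rw [mul_inv_rev, Units.val_mul, add_right_inj]
    ring

theorem phi_cj (hcd : ∀ i, c i (d i) = 1) (i0 i : Fin r) (g : FreeGroup (Fin r ⊕ Fin l ⊕ Fin k)) :
    phi r hkl m d c hcd i0 (cj i g) =
      Tr (SF k m) (Multiplicative.ofAdd ((chi r hkl m d c hcd g : (SF k m)ˣ) * (if i = i0 then 1 else 0))) := by
  ext x
  unfold cj
  rw [map_mul, map_mul, Equiv.Perm.mul_apply, Equiv.Perm.mul_apply, phi_ga, Tr_apply, Tr_apply, phi_sub,
    map_inv, map_inv, inv_inv]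
  simp

theorem phi_rel (hm : ∀ i : Fin l, k ≤ (i : ℕ) → 1 ≤ m i)
    (hcd : ∀ i, c i (d i) = 1) (i0 : Fin r) (w : FreeGroup (Fin r ⊕ Fin l ⊕ Fin k))
    (hw : w ∈ WFRel r l k hkl m d c) : phi r hkl m d c hcd i0 w = 1 := by
  have hcomm : ∀ x y, phi r hkl m d c hcd i0 x * phi r hkl m d c hcd i0 y =
      phi r hkl m d c hcd i0 y * phi r hkl m d c hcd i0 x →
      phi r hkl m d c hcd i0 (pcomm x y) = 1 := by
    intro x y h
    unfold pcomm
    rw [map_mul, map_mul, map_mul, map_inv, map_inv, mul_assoc, h]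
    group
  have hyy : ∀ y y' : Fin l ⊕ Fin k, phi r hkl m d c hcd i0 (pcomm (gy r y) (gy r y')) = 1 := by
    intro y y'
    apply hcomm
    rw [phi_gy, phi_gy, ← map_mul, mul_comm, map_mul]
  have hcc : ∀ i j g h, phi r hkl m d c hcd i0 (pcomm (cj i g) (cj j h)) = 1 := by
    intro i j g h
    apply hcomm
    rw [phi_cj, phi_cj, ← map_mul, mul_comm, map_mul]
  rcases hw with ⟨i, hi, rfl⟩ | ⟨i, j, rfl⟩ | ⟨i, j, rfl⟩ | ⟨i, j, rfl⟩ | ⟨i, j, rfl⟩ |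
    ⟨i, j, α, β, -, -, rfl⟩ | ⟨i, j, rfl⟩
  · rw [gt_eq, map_pow, phi_gy, ← map_pow, inv_pow, ← map_pow]
    have h1 : key hkl m (gy r (Sum.inl i : Fin l ⊕ Fin k) ^ m i) = 0 := by
      ext x
      · have : i ≠ Fin.castLE hkl x := by
          intro h; rw [h] at hi; simp at hi; omega
        simp [key, this]
      · rcases x with ⟨x, hx⟩
        by_cases hxi : i = x
        · subst hxi; simp [key]
        · simp [key, hxi]
    have h2 : chi r hkl m d c hcd (gy r (Sum.inl i : Fin l ⊕ Fin k) ^ m i) = 1 := by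
      rw [chi_apply, h1]; simp
    rw [h2, inv_one, map_one]
  · exact hyy _ _
  · exact hyy _ _
  · exact hyy _ _
  · rw [← cj_one, ← cj_one]; exact hcc _ _ _ _
  · exact hcc _ _ _ _
  · have e : (List.ofFn fun s : Fin (d j + 1) =>
             (gt r l k (Fin.castLE hkl j)) ^ (-(s : ℤ)) * (ga r l k i) ^ (c j s) *
             (gt r l k (Fin.castLE hkl j)) ^ ((s : ℕ) : ℤ)) =
      (List.ofFn fun s : Fin (d j + 1) => (cj i (tj r hkl j ^ (s : ℕ))) ^ (c j s)) := by
      congr 1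
      funext s
      unfold cj tj
      rw [gt_eq]
      have := conj_zpow (a := (gy r (Sum.inl (Fin.castLE hkl j)) ^ (s : ℕ))⁻¹) (b := ga r l k i) (i := c j s)
      rw [inv_inv] at this
      rw [this]
      simp
    rw [e, map_mul, map_inv, inv_mul_eq_one, map_list_prod, List.map_ofFn]
    have e2 : (phi r hkl m d c hcd i0 ∘ fun s : Fin (d j + 1) => (cj i (tj r hkl j ^ (s : ℕ))) ^ (c j s)) =
      fun s : Fin (d j + 1) => Tr (SF k m) (Multiplicative.ofAdd
        (c j s • ((chi r hkl m d c hcd (tj r hkl j ^ (s : ℕ)) : (SF k m)ˣ) * (if i = i0 then 1 else 0) : SF k m))) := by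
      funext s
      simp only [Function.comp]
      rw [map_zpow, phi_cj, ← map_zpow, ofAdd_zsmul]
    rw [e2]
    have e3 : ∀ (n : ℕ) (x : Fin n → SF k m), (List.ofFn fun s => Tr (SF k m) (Multiplicative.ofAdd (x s))).prod
        = Tr (SF k m) (Multiplicative.ofAdd (∑ s, x s)) := by
      intro n x
      rw [ofAdd_sum, ← List.prod_ofFn, map_list_prod, List.map_ofFn]
      rfl
    rw [e3, show (gu r l k j)⁻¹ * ga r l k i * gu r l k j = cj i (gu r l k j) from rfl, phi_cj, chi_u]
    congr 2
    rw [fS, map_sum, Finset.sum_mul, Finset.sum_range]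
    apply Finset.sum_congr rfl
    intro s _
    rw [chi_t hcd (by intro j; simp [tj]), key_pow, key_tj, ← smul_mul_assoc, ← map_zsmul,
      AddMonoidAlgebra.smul_single]
    simp

theorem phi_nc (hm : ∀ i : Fin l, k ≤ (i : ℕ) → 1 ≤ m i)
    (hcd : ∀ i, c i (d i) = 1) (i0 : Fin r) (w : FreeGroup (Fin r ⊕ Fin l ⊕ Fin k))
    (hw : w ∈ Subgroup.normalClosure (WFRel r l k hkl m d c)) : phi r hkl m d c hcd i0 w = 1 := by
  have : Subgroup.normalClosure (WFRel r l k hkl m d c) ≤ (phi r hkl m d c hcd i0).ker :=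
    Subgroup.normalClosure_le_normal (fun w hw => phi_rel hm hcd i0 w hw)
  exact this hw

theorem phi_lp (hcd : ∀ i, c i (d i) = 1) (i0 : Fin r)
    (L : List ((Fin r × FreeGroup (Fin r ⊕ Fin l ⊕ Fin k)) × Bool))
    (hL : ∀ z ∈ L, ∀ j, E (Sum.inr j) z.1.2 = 0) :
    phi r hkl m d c hcd i0 (lp L) = Tr (SF k m) (Multiplicative.ofAdd (algebraMap (SZ k m) (SF k m)
      (L.map (fun z => AddMonoidAlgebra.single (key hkl m z.1.2)
        (if z.1.1 = i0 then sn z.2 else 0))).sum)) := by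
  induction L with
  | nil => simp [lp]
  | cons a L ih =>
    have h1 := ih (fun z hz => hL z (by simp [hz]))
    unfold lp at h1 ⊢
    rw [List.map_cons, List.prod_cons, map_mul, h1, List.map_cons, List.sum_cons, map_add, ofAdd_add, map_mul]
    congr 1
    have h2 : phi r hkl m d c hcd i0 (cj a.1.1 a.1.2) = Tr (SF k m) (Multiplicative.ofAdd (algebraMap (SZ k m) (SF k m)
      (AddMonoidAlgebra.single (key hkl m a.1.2) (if a.1.1 = i0 then 1 else 0)))) := by
      rw [phi_cj, chi_t hcd (hL a (by simp))]
      split_ifs <;> simp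
    rcases a with ⟨⟨i, g⟩, b⟩
    cases b
    · simp only [sg, sn, Bool.false_eq_true, if_false]
      rw [map_inv, h2, ← map_inv, ← ofAdd_neg, ← map_neg, ← AddMonoidAlgebra.single_neg]
      simp only [apply_ite Neg.neg, neg_zero]
    · exact h2

theorem key_sums (hm : ∀ i : Fin l, k ≤ (i : ℕ) → 1 ≤ m i) (hcd : ∀ i, c i (d i) = 1)
    (L : List ((Fin r × FreeGroup (Fin r ⊕ Fin l ⊕ Fin k)) × Bool))
    (hL : ∀ z ∈ L, ∀ j, E (Sum.inr j) z.1.2 = 0)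
    (hw : lp L ∈ Subgroup.normalClosure (WFRel r l k hkl m d c))
    (q : Fin r × TT k m) [DecidableEq (Fin r × TT k m)] :
    (L.map (fun z => if (z.1.1, key hkl m z.1.2) = q then sn z.2 else 0)).sum = 0 := by
  have h1 := phi_nc hm hcd q.1 _ hw
  rw [phi_lp hcd q.1 L hL] at h1
  have h2 := congrArg (fun f => f (0 : SF k m)) h1
  simp only [Tr_apply, zero_add, Equiv.Perm.one_apply] at h2
  rw [← map_zero (algebraMap (SZ k m) (SF k m))] at h2
  have h3 := IsFractionRing.injective (SZ k m) (SF k m) h2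
  have h4 := congrArg (fun x => AddMonoidAlgebra.coeff x q.2) h3
  simp only [AddMonoidAlgebra.coeff_zero, Finsupp.zero_apply] at h4
  refine Eq.trans ?_ h4
  clear h1 h2 h3 h4 hw hL
  induction L with
  | nil => simp
  | cons a L ih =>
    rw [List.map_cons, List.sum_cons, ih, List.map_cons, List.sum_cons, AddMonoidAlgebra.coeff_add, Finsupp.add_apply]
    congr 1
    classical
    rw [AddMonoidAlgebra.coeff_single_apply]
    rcases q with ⟨q1, q2⟩
    simp only [Prod.mk.injEq]
    by_cases hh : a.1.1 = q1 <;> by_cases hh' : key hkl m a.1.2 = q2 <;> simp [hh, hh']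

theorem E_rel (w : FreeGroup (Fin r ⊕ Fin l ⊕ Fin k))
    (hw : w ∈ Subgroup.normalClosure (WFRel r l k hkl m d c)) (y : Fin l ⊕ Fin k) :
    (mu m y : ℤ) ∣ E y w := by
  have hp : ∀ (x z : FreeGroup (Fin r ⊕ Fin l ⊕ Fin k)), E y (pcomm x z) = 0 := by
    intro x z; unfold pcomm; simp
  refine Subgroup.closure_induction (p := fun w _ => (mu m y : ℤ) ∣ E y w) ?_ ?_ ?_ ?_ hw
  · intro x hx
    obtain ⟨w, hw, hc⟩ := Group.mem_conjugatesOfSet_iff.1 hx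
    obtain ⟨g, rfl⟩ := isConj_iff.1 hc
    rw [E_mul, E_mul, E_inv, add_neg_cancel_comm]
    rcases hw with ⟨i, hi, rfl⟩ | ⟨i, j, rfl⟩ | ⟨i, j, rfl⟩ | ⟨i, j, rfl⟩ | ⟨i, j, rfl⟩ |
      ⟨i, j, α, β, -, -, rfl⟩ | ⟨i, j, rfl⟩
    · rw [gt_eq, E_pow, E_gy]
      split_ifs with h
      · subst h
        simp [mu, not_lt.2 hi]
      · simp
    · simp [hp]
    · simp [hp]
    · simp [hp]
    · simp [hp]
    · simp [hp]
    · rw [E_mul, E_inv, List.ofFn_eq_map, E_list]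
      simp
  · simp
  · intro x y _ _ h1 h2
    rw [E_mul]; exact dvd_add h1 h2
  · intro x _ h
    rw [E_inv]; exact (dvd_neg).2 h

/-- explicit upper bound -/
def UB (m : Fin l → ℕ) (d : Fin k → ℕ) (c : Fin k → ℕ → ℤ) (n : ℕ) : ℕ :=
  AA d c n + NN d c n * NN d c n * (CC m d c (XX d n) +
    2 * (KQ l k * ((XX d n + XX d n) * (XX d n + XX d n)))) + KQ l k * (n * n)

theorem upper (hm : ∀ i : Fin l, k ≤ (i : ℕ) → 1 ≤ m i) (hd : ∀ i, 1 ≤ d i)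
    (hc0 : ∀ i, c i 0 = 1) (hcd : ∀ i, c i (d i) = 1) (n : ℕ)
    (w : FreeGroup (Fin r ⊕ Fin l ⊕ Fin k)) (hn : freeNorm w ≤ n)
    (hw : w ∈ Subgroup.normalClosure (WFRel r l k hkl m d c)) :
    AreaLe (WFRel r l k hkl m d c) w (UB m d c n) := by
  obtain ⟨v, p, h1, h2, h3, L, h4, h5, h6⟩ := structure_word (hkl := hkl) (m := m) hd hc0 hcd n w hn
  have hp : AreaLe (WFRel r l k hkl m d c) p (KQ l k * (n * n)) := q_triv h2 (fun y => by
    rw [← h3]; exact E_rel w hw y)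
  have hv : v ∈ Subgroup.normalClosure (WFRel r l k hkl m d c) := by
    have : v = w * p⁻¹ := by rw [h1, mul_inv_cancel_right]
    rw [this]
    exact mul_mem hw (inv_mem (al_mem hp))
  have hL : lp L ∈ Subgroup.normalClosure (WFRel r l k hkl m d c) := by
    have h7 := al_mem (ap_symm h6)
    have h8 : (UU r l k n)⁻¹ * v * UU r l k n ∈ Subgroup.normalClosure (WFRel r l k hkl m d c) := by
      simpa using Subgroup.normalClosure_normal.conj_mem v hv (UU r l k n)⁻¹
    have := mul_mem h7 h8
    rwa [inv_mul_cancel_right] at this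
  classical
  have h9 := cancel (R := WFRel r l k hkl m d c)
    (fun z : Fin r × FreeGroup (Fin r ⊕ Fin l ⊕ Fin k) => cj z.1 z.2)
    (fun z => (z.1, key hkl m z.2)) (CC m d c (XX d n) +
    2 * (KQ l k * ((XX d n + XX d n) * (XX d n + XX d n)))) (NN d c n) L h4
    (fun x hx y hy => com_mono (com_t hm hd hc0 hcd _ _ (h5 x hx).1 (h5 y hy).1 (h5 x hx).2
      (h5 y hy).2) (by omega))
    (fun x hx y hy hk => by
      simp only [Prod.mk.injEq] at hk
      obtain ⟨hk1, hk2⟩ := hk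
      change Ap _ _ (cj x.1.1 _) (cj y.1.1 _)
      rw [hk1]
      exact ap_mono (cj_ap _ (q_eq (h5 x hx).1 (h5 y hy).1
        (key_dvd hk2 (h5 x hx).2 (h5 y hy).2))) (by omega))
    (fun q => key_sums hm hcd L (fun z hz => (h5 z hz).2) hL q)
  have h10 := ap_al h6 h9
  rw [al_conj_iff] at h10
  rw [h1]
  exact al_mul h10 hp

end Model

section Growth

variable {r l k}

/-- exponentially bounded -/
def EB (f : ℕ → ℕ) : Prop := ∃ C : ℕ, ∀ n, f n ≤ C ^ (n + 1)

theorem eb_const (a : ℕ) : EB (fun _ => a) := by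
  refine ⟨a + 1, fun n => ?_⟩
  show a ≤ _
  have := Nat.le_self_pow (n := n + 1) (by omega) (a + 1)
  omega

theorem eb_id : EB (fun n => n) := ⟨2, fun n => by
  show n ≤ _
  have := Nat.lt_two_pow_self (n := n + 1)
  omega⟩

theorem eb_add {f g : ℕ → ℕ} (hf : EB f) (hg : EB g) : EB (fun n => f n + g n) := by
  obtain ⟨C, hC⟩ := hf
  obtain ⟨D, hD⟩ := hg
  refine ⟨C + D, fun n => (Nat.add_le_add (hC n) (hD n)).trans ?_⟩
  exact pow_add_pow_le (Nat.zero_le _) (Nat.zero_le _) (by omega)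

theorem eb_mul {f g : ℕ → ℕ} (hf : EB f) (hg : EB g) : EB (fun n => f n * g n) := by
  obtain ⟨C, hC⟩ := hf
  obtain ⟨D, hD⟩ := hg
  refine ⟨C * D, fun n => ?_⟩
  rw [mul_pow]
  exact Nat.mul_le_mul (hC n) (hD n)

theorem eb_pow (a b : ℕ) : EB (fun n => a ^ (b * n)) := by
  refine ⟨a ^ b + 1, fun n => ?_⟩
  show a ^ (b * n) ≤ _
  rw [pow_mul]
  exact (Nat.pow_le_pow_left (Nat.le_succ _) n).trans (Nat.pow_le_pow_right (by omega) (by omega))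

theorem eb_lin (a : ℕ) : EB (fun n => a * n) := eb_mul (eb_const a) eb_id

theorem eb_sq {f : ℕ → ℕ} (hf : EB f) : EB (fun n => f n * f n) := eb_mul hf hf

theorem eb_UB (m : Fin l → ℕ) (d : Fin k → ℕ) (c : Fin k → ℕ → ℤ) : EB (UB m d c) := by
  have hX : EB (XX d) := by
    unfold XX
    exact eb_add (eb_add eb_id (eb_lin k)) (eb_mul (eb_const _) (eb_mul (eb_const _) (eb_lin 2)))
  have hpow : ∀ a, EB (fun n => a ^ (k * (2 * n))) := by
    intro a
    have := eb_pow a (k * 2)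
    simpa only [mul_assoc] using this
  have hN : EB (NN d c) := by
    unfold NN
    exact eb_mul eb_id (hpow _)
  have hA : EB (AA d c) := by
    unfold AA
    exact eb_mul eb_id (hpow _)
  have hC : EB (fun n => CC m d c (XX d n)) := by
    unfold CC
    refine eb_mul ?_ ?_
    · have := eb_pow (K2 d c) (k * (2 * (1 + k + (1 + dd d) * (k * 2))))
      convert this using 3
      unfold XX
      ring
    · unfold Bs
      have h1 : EB (fun n => 2 * XX d n) := eb_mul (eb_const 2) hX
      have h2 : EB (fun n => 2 * XX d n + k * (2 * XX d n) * (3 * dd d + 2)) :=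
        eb_add h1 (eb_mul (eb_mul (eb_const k) h1) (eb_const _))
      exact eb_add (eb_const 1) (eb_mul (eb_const 4) (eb_mul (eb_const _)
        (eb_sq (eb_add h2 (eb_const _)))))
  unfold UB
  exact eb_add (eb_add hA (eb_mul (eb_sq hN) (eb_add hC (eb_mul (eb_const 2)
    (eb_mul (eb_const _) (eb_sq (eb_add hX hX))))))) (eb_mul (eb_const _) (eb_sq eb_id))

theorem eb_dom {f : ℕ → ℕ} (hf : EB f) : Dominates f (fun n => 2 ^ n) := by
  obtain ⟨C, hC⟩ := hf
  refine ⟨2 ^ C, by positivity, fun n => ?_⟩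
  have h1 : C ≤ 2 ^ C := Nat.lt_two_pow_self.le
  have h2 : C ^ (n + 1) ≤ (2 ^ C) ^ (n + 1) := Nat.pow_le_pow_left h1 _
  have h3 : (2 ^ C) ^ (n + 1) = 2 ^ C * 2 ^ (C * n) := by ring
  have h4 : 2 ^ (C * n) ≤ 2 ^ (2 ^ C * n) := Nat.pow_le_pow_right (by omega) (Nat.mul_le_mul_right _ h1)
  have h5 := Nat.mul_le_mul_left (2 ^ C) h4
  have h6 := hC n
  simp only
  omega

end Growth

section Analysis

/-- evaluation of the polynomial -/
def pe (n : ℕ) (f : ℕ → ℤ) (x : ℂ) : ℂ := ∑ s ∈ Finset.range (n + 1), (f s : ℂ) * x ^ s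

theorem pe_large (n : ℕ) (hn : 1 ≤ n) (f : ℕ → ℤ) (h0 : f 0 = 1) (h1 : f n = 1) (ρ : ℝ) (hρ : 0 < ρ) :
    ∃ x : ℂ, ‖x‖ = ρ ∧ 1 < ‖pe n f x‖ := by
  have hz := Complex.isPrimitiveRoot_exp n (by omega)
  set ζ := Complex.exp (2 * Real.pi * Complex.I / n)
  have hzn : ‖ζ‖ = 1 := Complex.norm_eq_one_of_pow_eq_one hz.pow_eq_one (by omega)
  by_contra hcon
  push Not at hcon
  have hsum : ∑ i ∈ Finset.range n, pe n f ((ρ : ℂ) * ζ ^ i) = n * (1 + (ρ : ℂ) ^ n) := by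
    unfold pe
    rw [Finset.sum_comm]
    have key : ∀ s ∈ Finset.range (n + 1), ∑ i ∈ Finset.range n, (f s : ℂ) * ((ρ : ℂ) * ζ ^ i) ^ s =
        (if s = 0 then (n : ℂ) else 0) + (if s = n then n * (ρ : ℂ) ^ n else 0) := by
      intro s hs
      rw [Finset.mem_range] at hs
      have e : ∑ i ∈ Finset.range n, (f s : ℂ) * ((ρ : ℂ) * ζ ^ i) ^ s =
          (f s : ℂ) * (ρ : ℂ) ^ s * ∑ i ∈ Finset.range n, (ζ ^ s) ^ i := by
        rw [Finset.mul_sum]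
        apply Finset.sum_congr rfl
        intro i _
        rw [mul_pow, ← pow_mul, ← pow_mul, mul_comm i s]
        ring
      rw [e]
      by_cases hs0 : s = 0
      · subst hs0
        have : ¬ (0 = n) := by omega
        simp [h0, this]
      by_cases hsn : s = n
      · subst hsn
        simp [h1, hz.pow_eq_one, hs0]
        ring
      · have hne : ζ ^ s ≠ 1 := by
          intro h
          have := hz.dvd_of_pow_eq_one s h
          have := Nat.le_of_dvd (by omega) this
          omega
        have hg : ∑ i ∈ Finset.range n, (ζ ^ s) ^ i = 0 := by
          rw [geom_sum_eq hne, ← pow_mul, mul_comm, pow_mul, hz.pow_eq_one]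
          simp
        simp [hg, hs0, hsn]
    rw [Finset.sum_congr rfl key, Finset.sum_add_distrib]
    simp
    ring
  have h2 : ‖∑ i ∈ Finset.range n, pe n f ((ρ : ℂ) * ζ ^ i)‖ ≤ n := by
    refine (norm_sum_le _ _).trans ?_
    refine (Finset.sum_le_sum (g := fun _ => (1 : ℝ)) ?_).trans (by simp)
    intro i _
    apply hcon
    rw [norm_mul, norm_pow, hzn, one_pow, mul_one, Complex.norm_real, Real.norm_of_nonneg hρ.le]
  rw [hsum] at h2
  have h3 : ‖(n : ℂ) * (1 + (ρ : ℂ) ^ n)‖ = n * (1 + ρ ^ n) := by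
    have : ((n : ℂ) * (1 + (ρ : ℂ) ^ n)) = ((n * (1 + ρ ^ n) : ℝ) : ℂ) := by push_cast; ring
    rw [this, Complex.norm_real, Real.norm_of_nonneg (by positivity)]
  rw [h3] at h2
  have : 0 < (n : ℝ) := by exact_mod_cast hn
  have : 0 < ρ ^ n := by positivity
  nlinarith

theorem pe_root (n : ℕ) (hn : 1 ≤ n) (f : ℕ → ℤ) (h1 : f n = 1) :
    ∃ x : ℂ, pe n f x = 0 := by
  set P : Polynomial ℂ := ∑ s ∈ Finset.range (n + 1), Polynomial.C (f s : ℂ) * Polynomial.X ^ s with hP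
  have hc : P.coeff n = 1 := by
    rw [hP, Polynomial.finset_sum_coeff]
    simp [Polynomial.coeff_X_pow, h1]
  have hd : 0 < P.degree := by
    have := Polynomial.le_degree_of_ne_zero (p := P) (n := n) (by rw [hc]; exact one_ne_zero)
    refine lt_of_lt_of_le ?_ this
    exact_mod_cast hn
  obtain ⟨x, hx⟩ := Complex.exists_root hd
  refine ⟨x, ?_⟩
  have := hx.eq_zero
  rw [hP, Polynomial.eval_finset_sum] at this
  simpa [pe] using this

theorem pe_cont (n : ℕ) (f : ℕ → ℤ) : Continuous (pe n f) := by
  unfold pe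
  fun_prop

theorem pe_pair (n : ℕ) (hn : 1 ≤ n) (f : ℕ → ℤ) (h0 : f 0 = 1) (h1 : f n = 1) :
    ∃ x y : ℂ, ‖x‖ * ‖y‖ = 1 ∧ 1 < ‖pe n f x‖ ∧ ‖pe n f x‖ * ‖pe n f y‖ = 1 := by
  obtain ⟨z, hz⟩ := pe_root n hn f h1
  have hz0 : z ≠ 0 := by
    rintro rfl
    unfold pe at hz
    rw [Finset.sum_range_succ'] at hz
    simp [h0] at hz
  have hρ : 0 < ‖z‖ := norm_pos_iff.2 hz0
  obtain ⟨x, hx, hx1⟩ := pe_large n hn f h0 h1 ‖z‖⁻¹ (by positivity)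
  obtain ⟨y1, hy, hy1⟩ := pe_large n hn f h0 h1 ‖z‖ hρ
  have hpre : IsPreconnected (Metric.sphere (0 : ℂ) ‖z‖) :=
    isPreconnected_sphere (by rw [Complex.rank_real_complex]; exact_mod_cast Nat.one_lt_two) _ _
  have hiv := hpre.intermediate_value (a := z) (b := y1) (by simp) (by simpa using hy)
    (f := fun y => ‖pe n f y‖) ((pe_cont n f).norm.continuousOn)
  have hmem : ‖pe n f x‖⁻¹ ∈ Set.Icc ‖pe n f z‖ ‖pe n f y1‖ := by
    rw [hz, norm_zero]
    refine ⟨by positivity, le_trans ?_ hy1.le⟩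
    exact inv_le_one_of_one_le₀ hx1.le
  obtain ⟨y, hy2, hy3⟩ := hiv hmem
  refine ⟨x, y, ?_, hx1, ?_⟩
  · rw [hx, mem_sphere_zero_iff_norm.1 hy2, inv_mul_cancel₀ hρ.ne']
  · simp only at hy3
    rw [hy3, mul_inv_cancel₀ (by linarith)]

end Analysis

section Lower

variable {r l k}

/-- the group of upper triangular matrices `[[1,b,z],[0,p,c],[0,0,q]]` -/
@[ext] structure HH where
  p : ℂˣ
  q : ℂˣ
  b : ℂ
  c : ℂ
  z : ℂ

namespace HH

instance : Mul HH := ⟨fun h g => ⟨h.p * g.p, h.q * g.q, g.b + h.b * g.p, h.p * g.c + h.c * g.q,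
  g.z + h.b * g.c + h.z * g.q⟩⟩
instance : One HH := ⟨⟨1, 1, 0, 0, 0⟩⟩
instance : Inv HH := ⟨fun h => ⟨h.p⁻¹, h.q⁻¹, -h.b * (h.p⁻¹ : ℂˣ), -h.c * (h.p⁻¹ : ℂˣ) * (h.q⁻¹ : ℂˣ),
  (h.b * h.c * (h.p⁻¹ : ℂˣ) - h.z) * (h.q⁻¹ : ℂˣ)⟩⟩

@[simp] theorem mul_p (h g : HH) : (h * g).p = h.p * g.p := rfl
@[simp] theorem mul_q (h g : HH) : (h * g).q = h.q * g.q := rfl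
@[simp] theorem mul_b (h g : HH) : (h * g).b = g.b + h.b * g.p := rfl
@[simp] theorem mul_c (h g : HH) : (h * g).c = h.p * g.c + h.c * g.q := rfl
@[simp] theorem mul_z (h g : HH) : (h * g).z = g.z + h.b * g.c + h.z * g.q := rfl
@[simp] theorem one_p : (1 : HH).p = 1 := rfl
@[simp] theorem one_q : (1 : HH).q = 1 := rfl
@[simp] theorem one_b : (1 : HH).b = 0 := rfl
@[simp] theorem one_c : (1 : HH).c = 0 := rfl
@[simp] theorem one_z : (1 : HH).z = 0 := rfl
theorem inv_def (h : HH) : h⁻¹ = ⟨h.p⁻¹, h.q⁻¹, -h.b * (h.p⁻¹ : ℂˣ),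
  -h.c * (h.p⁻¹ : ℂˣ) * (h.q⁻¹ : ℂˣ),
  (h.b * h.c * (h.p⁻¹ : ℂˣ) - h.z) * (h.q⁻¹ : ℂˣ)⟩ := rfl

instance : Group HH := Group.ofLeftAxioms
  (by
    intro x y z
    ext <;> simp <;> ring)
  (by
    intro x
    ext <;> simp)
  (by
    intro x
    have hp := x.p.ne_zero
    have hq := x.q.ne_zero
    ext
    · simp [inv_def]
    · simp [inv_def]
    · simp [inv_def]
    · simp [inv_def]
      field_simp
      ring
    · simp [inv_def]
      field_simp
      ring)

/-- unipotent elements -/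
def hz (b c z : ℂ) : HH := ⟨1, 1, b, c, z⟩

/-- diagonal elements -/
def D (p q : ℂˣ) : HH := ⟨p, q, 0, 0, 0⟩

theorem hz_mul (b c z b' c' z' : ℂ) :
    hz b c z * hz b' c' z' = hz (b + b') (c + c') (z + z' + b * c') := by
  ext <;> simp [hz] <;> ring

theorem hz_zero : hz 0 0 0 = 1 := rfl

theorem hz_inv (b c z : ℂ) : (hz b c z)⁻¹ = hz (-b) (-c) (b * c - z) := by
  rw [inv_eq_iff_mul_eq_one, hz_mul, ← hz_zero]
  congr 1 <;> ring

theorem D_mul (p q p' q' : ℂˣ) : D p q * D p' q' = D (p * p') (q * q') := by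
  ext <;> simp [D]

theorem D_pow (p q : ℂˣ) (n : ℕ) : D p q ^ n = D (p ^ n) (q ^ n) := by
  induction n with
  | zero => rfl
  | succ n ih => rw [pow_succ, ih, D_mul, pow_succ, pow_succ]

theorem pc_hz (b c z b' c' z' : ℂ) :
    pcomm (hz b c z) (hz b' c' z') = hz 0 0 (b * c' - b' * c) := by
  have h : hz b c z * hz b' c' z' = hz b' c' z' * hz b c z * hz 0 0 (b * c' - b' * c) := by
    rw [hz_mul, hz_mul, hz_mul]
    congr 1 <;> ring
  unfold pcomm
  rw [mul_assoc _ (hz b c z), h]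
  group

theorem conj_a (g : HH) : g⁻¹ * hz 1 1 0 * g =
    hz g.p (g.q * (g.p⁻¹ : ℂˣ)) (g.c - g.b * g.q * (g.p⁻¹ : ℂˣ)) := by
  have hp := g.p.ne_zero
  rw [mul_assoc, inv_mul_eq_iff_eq_mul]
  ext
  · simp [hz]
  · simp [hz]
  · simp [hz]; ring
  · simp [hz]; field_simp; ring
  · simp [hz]; field_simp; ring

theorem conj_z (g : HH) (z : ℂ) : g⁻¹ * hz 0 0 z * g = hz 0 0 (z * g.q) := by
  rw [mul_assoc, inv_mul_eq_iff_eq_mul]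
  ext <;> simp [hz] <;> ring

/-- unipotent with given coordinates -/
def Hp (h : HH) (b c : ℂ) : Prop := ∃ z, h = hz b c z

theorem Hp.mul {h g : HH} {b c b' c' : ℂ} (h1 : Hp h b c) (h2 : Hp g b' c') :
    Hp (h * g) (b + b') (c + c') := by
  obtain ⟨z, rfl⟩ := h1
  obtain ⟨z', rfl⟩ := h2
  exact ⟨_, hz_mul _ _ _ _ _ _⟩

theorem Hp.inv {h : HH} {b c : ℂ} (h1 : Hp h b c) : Hp h⁻¹ (-b) (-c) := by
  obtain ⟨z, rfl⟩ := h1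
  exact ⟨_, hz_inv _ _ _⟩

theorem Hp.pow {h : HH} {b c : ℂ} (h1 : Hp h b c) (n : ℕ) : Hp (h ^ n) (n * b) (n * c) := by
  induction n with
  | zero => exact ⟨0, by simp [hz_zero]⟩
  | succ n ih =>
    have := ih.mul h1
    rw [pow_succ]
    push_cast
    rw [add_mul, add_mul, one_mul, one_mul]
    exact this

theorem Hp.zpow {h : HH} {b c : ℂ} (h1 : Hp h b c) (n : ℤ) : Hp (h ^ n) (n * b) (n * c) := by
  obtain ⟨n, rfl | rfl⟩ := n.eq_nat_or_neg
  · simpa using h1.pow n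
  · simpa using (h1.pow n).inv

theorem Hp.list {ι : Type*} (L : List ι) (f : ι → HH) (b c : ι → ℂ)
    (h : ∀ i, Hp (f i) (b i) (c i)) : Hp (L.map f).prod (L.map b).sum (L.map c).sum := by
  induction L with
  | nil => exact ⟨0, by simp [hz_zero]⟩
  | cons a L ih => simpa using (h a).mul ih

end HH

open HH

/-- the representation of the free group -/
noncomputable def psi (r : ℕ) {l k : ℕ} (x y fx fy : Fin k → ℂˣ) :
    FreeGroup (Fin r ⊕ Fin l ⊕ Fin k) →* HH :=
  FreeGroup.lift (fun s => match s with
    | Sum.inl _ => hz 1 1 0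
    | Sum.inr (Sum.inl t) => if ht : (t : ℕ) < k then D (x ⟨t, ht⟩) (x ⟨t, ht⟩ * y ⟨t, ht⟩) else D 1 1
    | Sum.inr (Sum.inr j) => D (fx j) (fx j * fy j))

variable (x y fx fy : Fin k → ℂˣ)

theorem psi_ga (i : Fin r) : psi r (l := l) x y fx fy (ga r l k i) = hz 1 1 0 := by
  simp [psi, ga]

theorem psi_gu (j : Fin k) : psi r (l := l) x y fx fy (gu r l k j) = D (fx j) (fx j * fy j) := by
  simp [psi, gu]

theorem psi_gt (t : Fin l) : psi r x y fx fy (gt r l k t) =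
    if ht : (t : ℕ) < k then D (x ⟨t, ht⟩) (x ⟨t, ht⟩ * y ⟨t, ht⟩) else D 1 1 := by
  simp [psi, gt]

theorem psi_tj (hkl : k ≤ l) (j : Fin k) : psi r x y fx fy (tj r hkl j) = D (x j) (x j * y j) := by
  unfold tj
  rw [← gt_eq, psi_gt]
  simp

theorem psi_gy (s : Fin l ⊕ Fin k) : ∃ p q, psi r x y fx fy (gy r s) = D p q := by
  rcases s with t | j
  · rw [← gt_eq, psi_gt]
    split_ifs
    · exact ⟨_, _, rfl⟩
    · exact ⟨_, _, rfl⟩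
  · rw [← gu_eq, psi_gu]
    exact ⟨_, _, rfl⟩

theorem psi_cj (i : Fin r) (g : FreeGroup (Fin r ⊕ Fin l ⊕ Fin k)) :
    Hp (psi r x y fx fy (cj i g)) (psi r x y fx fy g).p
      ((psi r x y fx fy g).q * ((psi r x y fx fy g).p⁻¹ : ℂˣ)) := by
  unfold cj
  rw [map_mul, map_mul, map_inv, psi_ga]
  exact ⟨_, conj_a _⟩

theorem psi_cj_D (i : Fin r) (g : FreeGroup (Fin r ⊕ Fin l ⊕ Fin k)) (p q : ℂˣ)
    (h : psi r x y fx fy g = D p (p * q)) : Hp (psi r x y fx fy (cj i g)) p q := by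
  have := psi_cj x y fx fy i g
  rw [h] at this
  simp only [D] at this
  convert this using 1
  push_cast
  have := p.ne_zero
  field_simp

theorem psi_q (hxy : ∀ j, ‖(x j : ℂ)‖ * ‖(y j : ℂ)‖ = 1) (hf : ∀ j, ‖(fx j : ℂ)‖ * ‖(fy j : ℂ)‖ = 1)
    (g : FreeGroup (Fin r ⊕ Fin l ⊕ Fin k)) : ‖((psi r x y fx fy g).q : ℂ)‖ = 1 := by
  induction g using FreeGroup.induction_on with
  | C1 => simp
  | of s =>
    rcases s with i | t | j
    · change ‖((psi r x y fx fy (ga r l k i)).q : ℂ)‖ = 1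
      rw [psi_ga]; simp [hz]
    · change ‖((psi r x y fx fy (gt r l k t)).q : ℂ)‖ = 1
      rw [psi_gt]
      split_ifs
      · simp [D, hxy]
      · simp [D]
    · change ‖((psi r x y fx fy (gu r l k j)).q : ℂ)‖ = 1
      rw [psi_gu]; simp [D, hf]
  | inv_of s h => 
    rw [map_inv, inv_def]
    simp only [Units.val_inv_eq_inv_val, norm_inv, h, inv_one]
  | mul g h h1 h2 => rw [map_mul]; simp [h1, h2]

variable {hkl : k ≤ l} {m : Fin l → ℕ} {d : Fin k → ℕ} {c : Fin k → ℕ → ℤ}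

theorem psi_rel (hfx : ∀ j, (fx j : ℂ) = pe (d j) (c j) (x j)) (hfy : ∀ j, (fy j : ℂ) = pe (d j) (c j) (y j))
    (w : FreeGroup (Fin r ⊕ Fin l ⊕ Fin k))
    (hw : w ∈ WFRel r l k hkl m d c) : Hp (psi r x y fx fy w) 0 0 := by
  have hyy : ∀ s s' : Fin l ⊕ Fin k, Hp (psi r x y fx fy (pcomm (gy r s) (gy r s'))) 0 0 := by
    intro s s'
    obtain ⟨p, q, h⟩ := psi_gy (r := r) x y fx fy s
    obtain ⟨p', q', h'⟩ := psi_gy (r := r) x y fx fy s'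
    refine ⟨0, ?_⟩
    unfold pcomm
    rw [map_mul, map_mul, map_mul, map_inv, map_inv, h, h', mul_assoc _ (D p q), D_mul, mul_comm p,
      mul_comm q, ← D_mul, hz_zero]
    group
  have hcc : ∀ i j g h, Hp (psi r (l := l) x y fx fy (pcomm (cj i g) (cj j h))) 0 0 := by
    intro i j g h
    obtain ⟨z, hz⟩ := psi_cj x y fx fy i g
    obtain ⟨z', hz'⟩ := psi_cj x y fx fy j h
    have : ∀ a b, psi r (l := l) x y fx fy (pcomm a b) = pcomm (psi r x y fx fy a) (psi r x y fx fy b) := by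
      intro a b; simp [pcomm]
    rw [this, hz, hz', pc_hz]
    exact ⟨_, rfl⟩
  rcases hw with ⟨i, hi, rfl⟩ | ⟨i, j, rfl⟩ | ⟨i, j, rfl⟩ | ⟨i, j, rfl⟩ | ⟨i, j, rfl⟩ |
    ⟨i, j, α, β, -, -, rfl⟩ | ⟨i, j, rfl⟩
  · refine ⟨0, ?_⟩
    rw [map_pow, psi_gt, dif_neg (by omega), D_pow, one_pow, hz_zero]
    rfl
  · exact hyy _ _
  · exact hyy _ _
  · exact hyy _ _
  · rw [← cj_one, ← cj_one]; exact hcc _ _ _ _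
  · exact hcc _ _ _ _
  · have e : (List.ofFn fun s : Fin (d j + 1) =>
             (gt r l k (Fin.castLE hkl j)) ^ (-(s : ℤ)) * (ga r l k i) ^ (c j s) *
             (gt r l k (Fin.castLE hkl j)) ^ ((s : ℕ) : ℤ)) =
      (List.ofFn fun s : Fin (d j + 1) => (cj i (tj r hkl j ^ (s : ℕ))) ^ (c j s)) := by
      congr 1
      funext s
      unfold cj tj
      rw [gt_eq]
      have := conj_zpow (a := (gy r (Sum.inl (Fin.castLE hkl j)) ^ (s : ℕ))⁻¹) (b := ga r l k i) (i := c j s)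
      rw [inv_inv] at this
      rw [this]
      simp
    rw [e, map_mul, map_inv, map_list_prod, List.ofFn_eq_map, List.map_map]
    have h1 : Hp (psi r x y fx fy ((gu r l k j)⁻¹ * ga r l k i * gu r l k j)) (fx j) (fy j) :=
      psi_cj_D x y fx fy i _ _ _ (psi_gu x y fx fy j)
    have h2 := Hp.list (List.finRange (d j + 1))
      (fun s => psi r x y fx fy ((cj i (tj r hkl j ^ (s : ℕ))) ^ (c j s)))
      (fun s => (c j s : ℂ) * (x j : ℂ) ^ (s : ℕ)) (fun s => (c j s : ℂ) * (y j : ℂ) ^ (s : ℕ)) (by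
        intro s
        rw [map_zpow]
        have h3 := psi_cj_D x y fx fy i (tj r hkl j ^ (s : ℕ)) (x j ^ (s : ℕ)) (y j ^ (s : ℕ)) (by
          rw [map_pow, psi_tj, D_pow, mul_pow])
        simpa using h3.zpow (c j s))
    have h4 := h1.inv.mul h2
    have hs : ∀ v : ℂ, ((List.finRange (d j + 1)).map (fun s : Fin (d j + 1) => (c j s : ℂ) * v ^ (s : ℕ))).sum =
        pe (d j) (c j) v := by
      intro v
      unfold pe
      rw [Finset.sum_range, ← List.ofFn_eq_map, List.sum_ofFn]
    rw [hs, hs, ← hfx, ← hfy, neg_add_cancel, neg_add_cancel] at h4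
    exact h4

theorem rel_finite : (WFRel r l k hkl m d c).Finite := by
  have hadm : {α : Fin l → ℕ | Adm l k m d α}.Finite := by
    refine (Set.Finite.pi' (t := fun _ : Fin l => Set.Iic (BB m d)) (fun _ => Set.finite_Iic _)).subset ?_
    intro α h s
    show α s ≤ BB m d
    unfold BB
    by_cases hs : (s : ℕ) < k
    · have h1 := h.1 s hs
      have h2 := Finset.single_le_sum (f := d) (fun _ _ => Nat.zero_le _) (Finset.mem_univ ⟨s, hs⟩)
      omega
    · have h1 := h.2 s (by omega)
      have h2 := Finset.single_le_sum (f := m) (fun _ _ => Nat.zero_le _) (Finset.mem_univ s)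
      omega
  have f1 := Set.finite_range (fun i : Fin l => (gt r l k i) ^ (m i))
  have f2 := Set.finite_range (fun i : Fin k × Fin k => pcomm (gu r l k i.1) (gu r l k i.2))
  have f3 := Set.finite_range (fun i : Fin l × Fin l => pcomm (gt r l k i.1) (gt r l k i.2))
  have f4 := Set.finite_range (fun i : Fin l × Fin k => pcomm (gt r l k i.1) (gu r l k i.2))
  have f5 := Set.finite_range (fun i : Fin r × Fin r => pcomm (ga r l k i.1) (ga r l k i.2))
  have f6 := ((Set.finite_univ (α := Fin r × Fin r)).prod (hadm.prod hadm)).image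
    (fun z => pcomm ((tw r l k z.2.1)⁻¹ * ga r l k z.1.1 * tw r l k z.2.1)
      ((tw r l k z.2.2)⁻¹ * ga r l k z.1.2 * tw r l k z.2.2))
  have f7 := Set.finite_range (fun i : Fin r × Fin k =>
    ((gu r l k i.2)⁻¹ * ga r l k i.1 * gu r l k i.2)⁻¹ *
           (List.ofFn fun s : Fin (d i.2 + 1) =>
             (gt r l k (Fin.castLE hkl i.2)) ^ (-(s : ℤ)) * (ga r l k i.1) ^ (c i.2 s) *
             (gt r l k (Fin.castLE hkl i.2)) ^ ((s : ℕ) : ℤ)).prod)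
  refine (f1.union (f2.union (f3.union (f4.union (f5.union (f6.union f7)))))).subset ?_
  rintro w (⟨i, hi, rfl⟩ | ⟨i, j, rfl⟩ | ⟨i, j, rfl⟩ | ⟨i, j, rfl⟩ | ⟨i, j, rfl⟩ |
    ⟨i, j, α, β, h1, h2, rfl⟩ | ⟨i, j, rfl⟩)
  · exact Or.inl ⟨i, rfl⟩
  · exact Or.inr (Or.inl ⟨(i, j), rfl⟩)
  · exact Or.inr (Or.inr (Or.inl ⟨(i, j), rfl⟩))
  · exact Or.inr (Or.inr (Or.inr (Or.inl ⟨(i, j), rfl⟩)))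
  · exact Or.inr (Or.inr (Or.inr (Or.inr (Or.inl ⟨(i, j), rfl⟩))))
  · exact Or.inr (Or.inr (Or.inr (Or.inr (Or.inr (Or.inl
      ⟨((i, j), (α, β)), ⟨Set.mem_univ _, h1, h2⟩, rfl⟩)))))
  · exact Or.inr (Or.inr (Or.inr (Or.inr (Or.inr (Or.inr ⟨(i, j), rfl⟩)))))

theorem psi_area (hxy : ∀ j, ‖(x j : ℂ)‖ * ‖(y j : ℂ)‖ = 1)
    (hf : ∀ j, ‖(fx j : ℂ)‖ * ‖(fy j : ℂ)‖ = 1)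
    (hfx : ∀ j, (fx j : ℂ) = pe (d j) (c j) (x j)) (hfy : ∀ j, (fy j : ℂ) = pe (d j) (c j) (y j)) :
    ∃ C : ℕ, ∀ (w : FreeGroup (Fin r ⊕ Fin l ⊕ Fin k)) (N : ℕ), AreaLe (WFRel r l k hkl m d c) w N →
      ∃ z : ℂ, psi r x y fx fy w = hz 0 0 z ∧ ‖z‖ ≤ N * C := by
  obtain ⟨C0, hC0⟩ := ((rel_finite (r := r) (hkl := hkl) (m := m) (d := d) (c := c)).image
    (fun w => ‖(psi r x y fx fy w).z‖)).bddAbove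
  obtain ⟨C, hC⟩ := exists_nat_ge C0
  refine ⟨C, ?_⟩
  intro w N h
  obtain ⟨L, h1, h2, rfl⟩ := (areaLe_iff _ _).1 h
  have key : ∃ z : ℂ, psi r x y fx fy L.prod = hz 0 0 z ∧ ‖z‖ ≤ L.length * C := by
    clear h h1
    induction L with
    | nil => exact ⟨0, by simp [hz_zero], by simp⟩
    | cons a L ih =>
      obtain ⟨z, hz1, hz2⟩ := ih (fun x hx => h2 x (by simp [hx]))
      obtain ⟨s, f, hs, rfl⟩ := h2 a (by simp)
      have hrel : ∀ s ∈ WFRel r l k hkl m d c, ∃ z : ℂ, psi r x y fx fy s = hz 0 0 z ∧ ‖z‖ ≤ C := by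
        intro s hs
        obtain ⟨z, hz⟩ := psi_rel x y fx fy hfx hfy s hs
        refine ⟨z, hz, ?_⟩
        have := hC0 ⟨s, hs, rfl⟩
        simp only [hz] at this
        exact this.trans hC
      have hrel' : ∃ z : ℂ, psi r x y fx fy s = hz 0 0 z ∧ ‖z‖ ≤ C := by
        rcases hs with hs | hs
        · exact hrel s hs
        · obtain ⟨z, h3, h4⟩ := hrel _ hs
          refine ⟨-z, ?_, by rwa [norm_neg]⟩
          rw [map_inv, inv_eq_iff_eq_inv, hz_inv] at h3
          rw [h3]
          simp
      obtain ⟨z', h3, h4⟩ := hrel'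
      refine ⟨z' * (psi r x y fx fy f).q + z, ?_, ?_⟩
      · rw [List.prod_cons, map_mul, map_mul, map_mul, map_inv, h3, conj_z, hz1, hz_mul]
        simp
      · refine (norm_add_le _ _).trans ?_
        rw [norm_mul, psi_q x y fx fy hxy hf, mul_one]
        push_cast
        rw [List.length_cons]
        push_cast
        linarith
  obtain ⟨z, hz1, hz2⟩ := key
  refine ⟨z, hz1, hz2.trans ?_⟩
  have : (L.length : ℝ) ≤ N := by exact_mod_cast h1
  gcongr

theorem fn_mul (w v : FreeGroup (Fin r ⊕ Fin l ⊕ Fin k)) : freeNorm (w * v) ≤ freeNorm w + freeNorm v :=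
  @FreeGroup.norm_mul_le _ (Classical.decEq _) w v

theorem fn_inv (w : FreeGroup (Fin r ⊕ Fin l ⊕ Fin k)) : freeNorm w⁻¹ = freeNorm w :=
  @FreeGroup.norm_inv_eq _ (Classical.decEq _) w

theorem fn_of (s : Fin r ⊕ Fin l ⊕ Fin k) : freeNorm (FreeGroup.of s) = 1 :=
  @FreeGroup.norm_of _ (Classical.decEq _) s

theorem fn_pow (s : Fin r ⊕ Fin l ⊕ Fin k) (n : ℕ) : freeNorm (FreeGroup.of s ^ n) = n :=
  @FreeGroup.norm_of_pow _ (Classical.decEq _) s n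

theorem lower (hr : 1 ≤ r) (hk : 1 ≤ k) (hm : ∀ i : Fin l, k ≤ (i : ℕ) → 1 ≤ m i) (hd : ∀ i, 1 ≤ d i)
    (hc0 : ∀ i, c i 0 = 1) (hcd : ∀ i, c i (d i) = 1) :
    ∃ (ρ : ℝ) (C : ℕ), 1 < ρ ∧ ∀ n : ℕ, ∃ w ∈ Subgroup.normalClosure (WFRel r l k hkl m d c),
      freeNorm w ≤ 4 * n + 4 ∧ ∀ N, AreaLe (WFRel r l k hkl m d c) w N → ρ ^ n ≤ 1 + N * C := by
  have h := fun j => pe_pair (d j) (hd j) (c j) (hc0 j) (hcd j)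
  choose x y hxy h1 hf using h
  have nz : ∀ a b : ℂ, ‖a‖ * ‖b‖ = 1 → a ≠ 0 ∧ b ≠ 0 := by
    intro a b hab
    constructor <;> rintro rfl <;> simp at hab
  let X : Fin k → ℂˣ := fun j => Units.mk0 (x j) (nz _ _ (hxy j)).1
  let Y : Fin k → ℂˣ := fun j => Units.mk0 (y j) (nz _ _ (hxy j)).2
  let FX : Fin k → ℂˣ := fun j => Units.mk0 _ (nz _ _ (hf j)).1
  let FY : Fin k → ℂˣ := fun j => Units.mk0 _ (nz _ _ (hf j)).2
  obtain ⟨C, hC⟩ := psi_area (r := r) (hkl := hkl) (m := m) (d := d) (c := c) X Y FX FY hxy hf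
    (fun _ => rfl) (fun _ => rfl)
  let i : Fin r := ⟨0, by omega⟩
  let j : Fin k := ⟨0, by omega⟩
  refine ⟨‖pe (d j) (c j) (x j)‖, C, h1 j, fun n => ?_⟩
  refine ⟨pcomm (cj i (gu r l k j ^ n)) (cj i 1), ?_, ?_, ?_⟩
  · obtain ⟨N, hN⟩ := com_words (hkl := hkl) (m := m) (d := d) (c := c) hm hd hc0 hcd
      (cj i (gu r l k j ^ n)) (cj i 1) (fun y => by simp [cj]) (fun y => by simp [cj])
    exact al_mem ((com_iff).1 hN)
  · have ha : freeNorm (ga r l k i) = 1 := fn_of _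
    have hu : freeNorm (gu r l k j ^ n) = n := fn_pow _ _
    have hc1 : freeNorm (cj i (gu r l k j ^ n)) ≤ 2 * n + 1 := by
      unfold cj
      have e1 := fn_mul ((gu r l k j ^ n)⁻¹ * ga r l k i) (gu r l k j ^ n)
      have e2 := fn_mul (gu r l k j ^ n)⁻¹ (ga r l k i)
      rw [fn_inv] at e2
      omega
    rw [cj_one]
    unfold pcomm
    set g := cj i (gu r l k j ^ n)
    have e1 := fn_mul (g⁻¹ * (ga r l k i)⁻¹ * g) (ga r l k i)
    have e2 := fn_mul (g⁻¹ * (ga r l k i)⁻¹) g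
    have e3 := fn_mul g⁻¹ (ga r l k i)⁻¹
    rw [fn_inv, fn_inv] at e3
    omega
  · intro N hN
    obtain ⟨z, hz1, hz2⟩ := hC _ _ hN
    obtain ⟨z1, hz3⟩ := psi_cj_D (r := r) (l := l) X Y FX FY i (gu r l k j ^ n) (FX j ^ n) (FY j ^ n)
      (by rw [map_pow, psi_gu, D_pow, mul_pow])
    obtain ⟨z2, hz4⟩ := psi_cj_D (r := r) (l := l) X Y FX FY i 1 1 1 (by rw [map_one, mul_one]; rfl)
    have hp : psi r (l := l) X Y FX FY (pcomm (cj i (gu r l k j ^ n)) (cj i 1)) =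
        pcomm (psi r X Y FX FY (cj i (gu r l k j ^ n))) (psi r (l := l) X Y FX FY (cj i 1)) := by
      simp [pcomm]
    rw [hp, hz3, hz4, pc_hz] at hz1
    have hz5 := congrArg HH.z hz1
    simp only [hz, Units.val_one, mul_one, one_mul, Units.val_pow_eq_pow_val] at hz5
    rw [← hz5] at hz2
    have e1 := norm_sub_norm_le ((FX j : ℂ) ^ n) ((FY j : ℂ) ^ n)
    rw [norm_pow, norm_pow] at e1
    have e2 : ‖(FY j : ℂ)‖ ^ n ≤ 1 := by
      apply pow_le_one₀ (norm_nonneg _)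
      have e3 : ‖(FX j : ℂ)‖ * ‖(FY j : ℂ)‖ = 1 := hf j
      have e4 : 1 < ‖(FX j : ℂ)‖ := h1 j
      nlinarith [norm_nonneg (FY j : ℂ)]
    have e5 : ‖(FX j : ℂ)‖ = ‖pe (d j) (c j) (x j)‖ := rfl
    rw [e5] at e1
    linarith

theorem final (hr : 1 ≤ r) (hk : 1 ≤ k) (hm : ∀ i : Fin l, k ≤ (i : ℕ) → 1 ≤ m i) (hd : ∀ i, 1 ≤ d i)
    (hc0 : ∀ i, c i 0 = 1) (hcd : ∀ i, c i (d i) = 1) :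
    ∃ δ : ℕ → ℕ, IsDehnFunctionOf (WFRel r l k hkl m d c) δ ∧
      DehnEquiv δ (fun n => 2 ^ n) := by
  classical
  let S : ℕ → Set ℕ := fun n => {N | ∀ w ∈ Subgroup.normalClosure (WFRel r l k hkl m d c),
    freeNorm w ≤ n → AreaLe (WFRel r l k hkl m d c) w N}
  have hS : ∀ n, UB m d c n ∈ S n := fun n w hw hn => upper hm hd hc0 hcd n w hn hw
  have hI : ∀ n, sInf (S n) ∈ S n := fun n => Nat.sInf_mem ⟨_, hS n⟩
  refine ⟨fun n => sInf (S n), fun n => ⟨hI n, fun N hN => Nat.sInf_le hN⟩, ?_, ?_⟩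
  · obtain ⟨C, hC, h⟩ := eb_dom (eb_UB m d c)
    exact ⟨C, hC, fun n => (Nat.sInf_le (hS n)).trans (h n)⟩
  · obtain ⟨ρ, C, hρ, h⟩ := lower (r := r) (hkl := hkl) (m := m) (d := d) (c := c) hr hk hm hd hc0 hcd
    obtain ⟨P, hP⟩ := pow_unbounded_of_one_lt 2 hρ
    refine ⟨C + (4 * P + 4), by omega, fun n => ?_⟩
    rcases Nat.eq_zero_or_pos n with rfl | hn
    · show 2 ^ 0 ≤ _
      simp only [pow_zero]
      omega
    obtain ⟨w, hw, hwn, hA⟩ := h (P * n)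
    have hle : freeNorm w ≤ (C + (4 * P + 4)) * n := by
      refine hwn.trans ?_
      nlinarith [Nat.zero_le (C * n)]
    have h1 := hA _ (hI ((C + (4 * P + 4)) * n) w hw hle)
    rw [pow_mul] at h1
    have h2 : (2 : ℝ) ^ n ≤ (ρ ^ P) ^ n := by gcongr
    have h3 := h2.trans h1
    have h4 : 2 ^ n ≤ 1 + sInf (S ((C + (4 * P + 4)) * n)) * C := by exact_mod_cast h3
    show 2 ^ n ≤ _
    refine h4.trans ?_
    beta_reduce
    generalize sInf (S ((C + (4 * P + 4)) * n)) = T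
    nlinarith [Nat.zero_le (P * T), Nat.zero_le (P * n), Nat.zero_le (C * n)]

end Lower

/-- The group `W_F` is metabelian and the Dehn function of its given
finite presentation is equivalent to `2ⁿ`. -/
theorem wf_metabelian_exponential_dehn
    (hr : 1 ≤ r) (hk : 1 ≤ k) (hkl : k ≤ l)
    (m : Fin l → ℕ) (hm : ∀ i : Fin l, k ≤ (i : ℕ) → 1 ≤ m i)
    (d : Fin k → ℕ) (hd : ∀ i, 1 ≤ d i)
    (c : Fin k → ℕ → ℤ) (hc0 : ∀ i, c i 0 = 1) (hcd : ∀ i, c i (d i) = 1) :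
    IsMetabelian (FreeGroup (Fin r ⊕ Fin l ⊕ Fin k) ⧸
      Subgroup.normalClosure (WFRel r l k hkl m d c)) ∧
    ∃ δ : ℕ → ℕ, IsDehnFunctionOf (WFRel r l k hkl m d c) δ ∧
      DehnEquiv δ (fun n => 2 ^ n) := by
  exact ⟨metab hm hd hc0 hcd, final hr hk hm hd hc0 hcd⟩

end WF
end

section
/- Let F be the free group on t₁,…,t_k and let w ∈ F have reduced length n. Let m_i be the exponent sum of t_i in w and set w̄ = t₁^{m₁}⋯t_k^{m_k}. Then there exist p ≤ n², elements u₁,…,u_p ∈ F each of reduced length at most n, indices 1 ≤ i_s < j_s ≤ k and signs ε_s ∈ {±1} (1 ≤ s ≤ p), such that w = w̄ · ∏_{s=1}^p u_s⁻¹·[t_{i_s}, t_{j_s}]^{ε_s}·u_s holds in F. -/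
open Function

/-- The exponent sum of the letter `s` in a word of the free group on `Fin k`. -/
def expSum {k : ℕ} (s : Fin k) : FreeGroup (Fin k) →* Multiplicative ℤ :=
  FreeGroup.lift fun i => Multiplicative.ofAdd (if i = s then (1 : ℤ) else 0)

/-- The ordered word `w̄ = t₁^{m₁}⋯t_k^{m_k}` with the same exponent sums as `w`. -/
def obar {k : ℕ} (w : FreeGroup (Fin k)) : FreeGroup (Fin k) :=
  (List.ofFn fun s : Fin k => (FreeGroup.of s) ^ (Multiplicative.toAdd (expSum s w))).prod

section FGO
variable {k : ℕ}

lemma freeNorm_eq' (w : FreeGroup (Fin k)) : freeNorm w = FreeGroup.norm w := by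
  unfold freeNorm FreeGroup.norm
  congr!

/-- one conjugate -/
def fgoF (a : FreeGroup (Fin k) × (Fin k × Fin k) × ℤ) : FreeGroup (Fin k) :=
  a.1⁻¹ * (pcomm (FreeGroup.of a.2.1.1) (FreeGroup.of a.2.1.2)) ^ a.2.2 * a.1

/-- products of conjugates -/
def FgoP (N L : ℕ) (g : FreeGroup (Fin k)) : Prop :=
  ∃ l : List (FreeGroup (Fin k) × (Fin k × Fin k) × ℤ), l.length ≤ N ∧
    (∀ a ∈ l, a.1.norm ≤ L ∧ a.2.1.1 < a.2.1.2 ∧ (a.2.2 = 1 ∨ a.2.2 = -1)) ∧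
    g = (l.map fgoF).prod

lemma FgoP.one (N L : ℕ) : FgoP N L (1 : FreeGroup (Fin k)) := ⟨[], by simp⟩

lemma FgoP.mul {N M L : ℕ} {g h : FreeGroup (Fin k)} (hg : FgoP N L g) (hh : FgoP M L h) :
    FgoP (N + M) L (g * h) := by
  obtain ⟨l, h1, h2, rfl⟩ := hg
  obtain ⟨l', h1', h2', rfl⟩ := hh
  refine ⟨l ++ l', by simp; omega, ?_, by simp⟩
  intro a ha
  rcases List.mem_append.1 ha with ha | ha
  · exact h2 a ha
  · exact h2' a ha

lemma FgoP.mono {N M L L' : ℕ} {g : FreeGroup (Fin k)} (hg : FgoP N L g) (h : N ≤ M)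
    (h' : L ≤ L') : FgoP M L' g := by
  obtain ⟨l, h1, h2, rfl⟩ := hg
  exact ⟨l, h1.trans h, fun a ha => ⟨(h2 a ha).1.trans h', (h2 a ha).2⟩, rfl⟩

lemma FgoP.conj {N L : ℕ} {g : FreeGroup (Fin k)} (hg : FgoP N L g) (x : FreeGroup (Fin k))
    (hx : x.norm ≤ 1) : FgoP N (L + 1) (x⁻¹ * g * x) := by
  obtain ⟨l, h1, h2, rfl⟩ := hg
  refine ⟨l.map fun a => (a.1 * x, a.2), by simpa using h1, ?_, ?_⟩
  · intro a ha
    obtain ⟨b, hb, rfl⟩ := List.mem_map.1 ha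
    exact ⟨(FreeGroup.norm_mul_le _ _).trans (add_le_add (h2 b hb).1 hx), (h2 b hb).2⟩
  · clear h1 h2
    induction l with
    | nil => simp
    | cons a l ih =>
      simp only [List.map_cons, List.prod_cons]
      rw [← ih]
      simp only [fgoF]
      group

lemma FgoP.single {L : ℕ} (u : FreeGroup (Fin k)) (i j : Fin k) (e : ℤ) (hu : u.norm ≤ L)
    (hij : i < j) (he : e = 1 ∨ e = -1) : FgoP 1 L (fgoF (u, (i, j), e)) :=
  ⟨[(u, (i, j), e)], by simp, by simp [hu, hij, he], by simp⟩

lemma fgo_letter (i : Fin k) (b : Bool) : (FreeGroup.mk [(i, b)]).norm ≤ 1 :=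
  FreeGroup.norm_mk_le

lemma fgo_mkt (i : Fin k) : FreeGroup.mk [(i, true)] = FreeGroup.of i := rfl

lemma fgo_mkf (i : Fin k) : FreeGroup.mk [(i, false)] = (FreeGroup.of i)⁻¹ := rfl

lemma fgo_comm (i j : Fin k) (hij : i < j) (b c : Bool) (B : FreeGroup (Fin k)) (L : ℕ)
    (hB : B.norm ≤ L) :
    FgoP 1 (L + 2) (B⁻¹ * pcomm (FreeGroup.mk [(j, b)]) (FreeGroup.mk [(i, c)]) * B) := by
  have hi : ((FreeGroup.of i)⁻¹).norm ≤ 1 := fgo_letter i false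
  have hj : ((FreeGroup.of j)⁻¹).norm ≤ 1 := fgo_letter j false
  have h1 := FreeGroup.norm_mul_le (FreeGroup.of i)⁻¹ B
  have h2 := FreeGroup.norm_mul_le (FreeGroup.of j)⁻¹ B
  have h3 := FreeGroup.norm_mul_le (FreeGroup.of i)⁻¹ ((FreeGroup.of j)⁻¹ * B)
  cases b <;> cases c <;> simp only [fgo_mkt, fgo_mkf]
  · convert FgoP.single (L := L + 2) ((FreeGroup.of i)⁻¹ * ((FreeGroup.of j)⁻¹ * B)) i j (-1)
      (by omega) hij (by simp) using 1
    simp only [fgoF, pcomm]; group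
  · convert FgoP.single (L := L + 2) ((FreeGroup.of j)⁻¹ * B) i j 1
      (by omega) hij (by simp) using 1
    simp only [fgoF, pcomm]; group
  · convert FgoP.single (L := L + 2) ((FreeGroup.of i)⁻¹ * B) i j 1
      (by omega) hij (by simp) using 1
    simp only [fgoF, pcomm]; group
  · convert FgoP.single (L := L + 2) B i j (-1)
      (by omega) hij (by simp) using 1
    simp only [fgoF, pcomm]; group

lemma fgo_tail (i : Fin k) (c : Bool) (B : List (Fin k × Bool)) (hB : ∀ a ∈ B, i < a.1) :
    ∃ g, FreeGroup.mk B * FreeGroup.mk [(i, c)] = FreeGroup.mk [(i, c)] * FreeGroup.mk B * g ∧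
      FgoP B.length (B.length + 1) g := by
  induction B with
  | nil => exact ⟨1, by simp [← FreeGroup.one_eq_mk], FgoP.one _ _⟩
  | cons y B ih =>
    obtain ⟨g, h1, h2⟩ := ih fun a ha => hB a (List.mem_cons_of_mem _ ha)
    have h3 := fgo_comm i y.1 (hB y List.mem_cons_self) y.2 c (FreeGroup.mk B) B.length
      FreeGroup.norm_mk_le
    have e : FreeGroup.mk (y :: B) = FreeGroup.mk [(y.1, y.2)] * FreeGroup.mk B := by
      rw [FreeGroup.mul_mk]; rfl
    refine ⟨_, ?_, (h3.mul (h2.mono le_rfl (by omega))).mono (M := (y :: B).length)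
      (L' := (y :: B).length + 1) (by simp; omega) (by simp)⟩
    rw [e, mul_assoc, h1]
    simp only [pcomm]
    group

lemma fgo_zpow (j : Fin k) (m : ℤ) : ∃ B : List (Fin k × Bool),
    FreeGroup.mk B = FreeGroup.of j ^ m ∧ B.length = m.natAbs ∧ ∀ a ∈ B, a.1 = j := by
  have key : ∀ (b : Bool) (n : ℕ), FreeGroup.mk (List.replicate n (j, b))
      = (FreeGroup.mk [(j, b)]) ^ n := by
    intro b n
    induction n with
    | zero => rfl
    | succ n ih => rw [pow_succ', ← ih, FreeGroup.mul_mk]; rfl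
  rcases Int.natAbs_eq m with h | h
  · refine ⟨List.replicate m.natAbs (j, true), ?_, by simp, ?_⟩
    · rw [key, fgo_mkt]; conv_rhs => rw [h]
      rw [zpow_natCast]
    · intro a ha; rw [List.eq_of_mem_replicate ha]
  · refine ⟨List.replicate m.natAbs (j, false), ?_, by simp, ?_⟩
    · rw [key, fgo_mkf]; conv_rhs => rw [h]
      rw [zpow_neg, zpow_natCast, inv_pow]
    · intro a ha; rw [List.eq_of_mem_replicate ha]

lemma fgo_list (m : Fin k → ℤ) (l : List (Fin k)) : ∃ B : List (Fin k × Bool),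
    FreeGroup.mk B = (l.map fun s => FreeGroup.of s ^ m s).prod ∧
      B.length = (l.map fun s => (m s).natAbs).sum ∧ ∀ a ∈ B, a.1 ∈ l := by
  induction l with
  | nil => exact ⟨[], by simp [← FreeGroup.one_eq_mk]⟩
  | cons j l ih =>
    obtain ⟨B, h1, h2, h3⟩ := ih
    obtain ⟨C, h1', h2', h3'⟩ := fgo_zpow j (m j)
    refine ⟨C ++ B, ?_, by simp [h2, h2'], ?_⟩
    · rw [← FreeGroup.mul_mk, h1, h1']; simp
    · intro a ha
      rcases List.mem_append.1 ha with ha | ha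
      · simp [h3' a ha]
      · simp [h3 a ha]

/-- sign -/
def fgoS (c : Bool) : ℤ := if c then 1 else -1

lemma fgo_insert (m : Fin k → ℤ) (i : Fin k) (c : Bool) (l : List (Fin k))
    (hl : l.Pairwise (· < ·)) (hi : i ∈ l) :
    ∃ g, (l.map fun s => FreeGroup.of s ^ m s).prod * FreeGroup.mk [(i, c)] =
      (l.map fun s => FreeGroup.of s ^ (m s + if i = s then fgoS c else 0)).prod * g ∧
      FgoP (l.map fun s => (m s).natAbs).sum ((l.map fun s => (m s).natAbs).sum + 1) g := by
  induction l with
  | nil => simp at hi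
  | cons j l ih =>
    rw [List.pairwise_cons] at hl
    by_cases hij : i = j
    · subst hij
      obtain ⟨B, h1, h2, h3⟩ := fgo_list m l
      obtain ⟨g, h4, h5⟩ := fgo_tail i c B fun a ha => hl.1 _ (h3 a ha)
      refine ⟨g, ?_, h5.mono (by simp [h2]) (by simp [h2])⟩
      have e : (l.map fun s => FreeGroup.of s ^ (m s + if i = s then fgoS c else 0))
          = l.map fun s => FreeGroup.of s ^ m s := by
        apply List.map_congr_left
        intro s hs
        rw [if_neg (hl.1 s hs).ne, add_zero]
      have e2 : FreeGroup.mk [(i, c)] = FreeGroup.of i ^ fgoS c := by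
        cases c <;> simp [fgoS, fgo_mkf, fgo_mkt]
      rw [List.map_cons, List.map_cons, List.prod_cons, List.prod_cons, e, ← h1, mul_assoc, h4,
        if_pos rfl, zpow_add, e2]
      group
    · obtain ⟨g, h1, h2⟩ := ih hl.2 (by simpa [hij] using hi)
      refine ⟨g, ?_, h2.mono (by simp) (by simp)⟩
      rw [List.map_cons, List.map_cons, List.prod_cons, List.prod_cons, mul_assoc, h1,
        if_neg hij, add_zero, mul_assoc]

lemma fgo_expSum (s : Fin k) (v : FreeGroup (Fin k)) (i : Fin k) (c : Bool) :
    Multiplicative.toAdd (expSum s (v * FreeGroup.mk [(i, c)])) =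
      Multiplicative.toAdd (expSum s v) + if i = s then fgoS c else 0 := by
  rw [map_mul, toAdd_mul]
  congr 1
  cases c <;> simp only [fgo_mkf, fgo_mkt, map_inv, expSum, FreeGroup.lift_apply_of, fgoS] <;>
    by_cases h : i = s <;> simp [h]

lemma fgo_obar (v : FreeGroup (Fin k)) : obar v = ((List.finRange k).map fun s =>
    FreeGroup.of s ^ Multiplicative.toAdd (expSum s v)).prod := by
  rw [obar, List.ofFn_eq_map]

lemma fgo_sum (i : Fin k) (l : List (Fin k)) (hl : l.Pairwise (· < ·)) (m : Fin k → ℤ)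
    (c : Bool) :
    (l.map fun s => (m s + if i = s then fgoS c else 0).natAbs).sum ≤
      (l.map fun s => (m s).natAbs).sum + if i ∈ l then 1 else 0 := by
  induction l with
  | nil => simp
  | cons j l ih =>
    rw [List.pairwise_cons] at hl
    have := ih hl.2
    simp only [List.map_cons, List.sum_cons, List.mem_cons]
    by_cases hij : i = j
    · subst hij
      have hn : i ∉ l := fun h => lt_irrefl _ (hl.1 i h)
      have : (m i + fgoS c).natAbs ≤ (m i).natAbs + 1 := by
        cases c <;> simp only [fgoS] <;> simp <;> omega
      simp only [hn, if_false, if_true, true_or] at *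
      omega
    · simp only [hij, if_false, false_or, add_zero]
      omega

lemma fgo_main (W : List (Fin k × Bool)) :
    ((List.finRange k).map fun s =>
      (Multiplicative.toAdd (expSum s (FreeGroup.mk W))).natAbs).sum ≤ W.length ∧
    ∃ g, FreeGroup.mk W = obar (FreeGroup.mk W) * g ∧ FgoP (W.length ^ 2) W.length g := by
  induction W using List.reverseRecOn with
  | nil =>
    rw [← FreeGroup.one_eq_mk]
    refine ⟨by simp, 1, ?_, FgoP.one _ _⟩
    simp [fgo_obar]
  | append_singleton W y ih =>
    obtain ⟨i, c⟩ := y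
    obtain ⟨h1, g, h2, h3⟩ := ih
    have hp : (List.finRange k).Pairwise (· < ·) := List.pairwise_lt_finRange k
    rw [← FreeGroup.mul_mk, fgo_obar]
    simp only [fgo_expSum]
    constructor
    · have := fgo_sum i (List.finRange k) hp
        (fun s => Multiplicative.toAdd (expSum s (FreeGroup.mk W))) c
      simp only [List.mem_finRange, if_true] at this
      simp only [List.length_append, List.length_singleton]
      omega
    · obtain ⟨g', h4, h5⟩ := fgo_insert
        (fun s => Multiplicative.toAdd (expSum s (FreeGroup.mk W))) i c (List.finRange k) hp
        (List.mem_finRange i)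
      refine ⟨_, ?_, ((h5.mono (M := W.length) (L' := W.length + 1) h1 (by omega)).mul
        (h3.conj (FreeGroup.mk [(i, c)]) (fgo_letter i c))).mono
        (by simp only [List.length_append, List.length_singleton]; nlinarith) (by simp)⟩
      rw [← mul_assoc, ← h4, ← fgo_obar]
      conv_lhs => rw [h2]
      group

end FGO

/-- Every word `w` of reduced length `n` in the free group on
`t₁,…,t_k` equals `w̄` times a product of at most `n²` conjugates of commutators
`[tᵢ,tⱼ]^{±1}` (`i < j`), with conjugators of reduced length at most `n`. -/
theorem free_group_ordering (k : ℕ) (w : FreeGroup (Fin k)) (n : ℕ)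
    (hn : freeNorm w = n) :
    ∃ p : ℕ, p ≤ n ^ 2 ∧
      ∃ (u : Fin p → FreeGroup (Fin k)) (ij : Fin p → Fin k × Fin k) (ε : Fin p → ℤ),
        (∀ s, freeNorm (u s) ≤ n) ∧ (∀ s, (ij s).1 < (ij s).2) ∧
        (∀ s, ε s = 1 ∨ ε s = -1) ∧
        w = obar w * (List.ofFn fun s => (u s)⁻¹ *
          (pcomm (FreeGroup.of (ij s).1) (FreeGroup.of (ij s).2)) ^ (ε s) * u s).prod := by
  rw [freeNorm_eq', FreeGroup.norm] at hn
  obtain ⟨-, g, h1, l, h2, h3, h4⟩ := fgo_main w.toWord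
  rw [FreeGroup.mk_toWord] at h1
  rw [hn] at h2 h3
  refine ⟨l.length, h2, fun s => (l.get s).1, fun s => (l.get s).2.1, fun s => (l.get s).2.2,
    fun s => ?_, fun s => (h3 _ (l.get_mem s)).2.1, fun s => (h3 _ (l.get_mem s)).2.2, ?_⟩
  · rw [freeNorm_eq']
    exact (h3 _ (l.get_mem s)).1
  · have e : (List.ofFn fun s => fgoF (l.get s)) = l.map fgoF := by
      conv_rhs => rw [← List.ofFn_get l]
      rw [List.map_ofFn]; rfl
    rw [← e] at h4
    rw [h4] at h1
    exact h1
end
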